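/- Let M = V ∪_S W be the standard genus three Heegaard splitting of the 3-torus, D the meridian disk q({z = 1/2} ∩ C) ∩ V, and E the meridian disk q({z = 0} ∩ C) ∩ W. Cutting V along D yields a genus two handlebody V′ in which ∂E separates ∂V′ into two once-punctured tori T₁ and T₂, and V′ is homeomorphic to T₁ × I. -/

import Mathlib

/-!
In coordinates on `T³ = ℝ³/(2ℤ)³`, the set `V` consists of the points two of whose coordinates are
within `1/4` of `0`, and `V'` is the product of a plus-shaped neighborhood of the two coordinate
circles of the torus with `[-1/4, 1/4]` (the thickened cross), with a finger
`[-1/4, 1/4]² × [-5/4, -1/4]` hanging below its centre. The curve `∂E` is the horizontal curve at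
height `0` on the vertical sides of the cross, so it cuts `∂V'` into an upper half `T₁` and a lower
half `T₂`.

A radial stretch about `(0, 0, 1/4)` pushes the finger back into the cross, so that `V'` is
homeomorphic to the thickened cross and `T₂` becomes the mirror image of `T₁`. The plus-shaped
region is the flat torus minus an open square centred at the corner of the fundamental square; each
half of the boundary is this region with a collar added, hence a once-punctured torus, and the
thickened cross is the product of such a surface with an interval.

That the thickened cross is a handlebody of genus two means that thickening forgets how the
punctured torus is embedded. The cross is a thickened annulus `|y| ≤ 1/4` with a solid handle
`|x| ≤ 1/4` attached to its two opposite sides. Rotating the square cross-sections of the annulus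
and of the handle by a half turn along the way moves both attaching regions to the same side,
without linking, and the gluing pattern becomes that of a *planar* annulus with a planar band on its
outer boundary: a rectangle with two holes. On the other side, the sup-metric neighborhood of two
tangent circles is a planar region times `[-1/4, 1/4]`, and each half of this region is a
star-shaped annulus that Minkowski gauges carry radially to one half of the rectangle.

All homeomorphisms come from one principle: two continuous maps from a compact space to Hausdorff
spaces with the same fibres have homeomorphic images.
-/

open Set Metric Topology

noncomputable section

/-- The closed unit disk in the plane. -/
def Disk2 : Set (ℝ × ℝ) := Metric.closedBall 0 1

/-- The unit circle in the plane. -/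
def Circle1 : Set (ℝ × ℝ) := Metric.sphere 0 1

variable {X : Type*} [TopologicalSpace X]

/-- `γ` is a simple closed curve (an embedded image of the unit circle). -/
def IsSCC (γ : Set X) : Prop :=
  ∃ f : (ℝ × ℝ) → X, ContinuousOn f Circle1 ∧ Set.InjOn f Circle1 ∧ f '' Circle1 = γ

/-- The curve `γ` bounds an embedded disk contained in `A`. -/
def BoundsDiskIn (γ A : Set X) : Prop :=
  ∃ f : (ℝ × ℝ) → X, ContinuousOn f Disk2 ∧ Set.InjOn f Disk2 ∧
    f '' Disk2 ⊆ A ∧ f '' Circle1 = γ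

/-- `Δ` is a properly embedded disk in `V` whose boundary lies on the surface `S`. -/
def IsProperDisk (Δ V S : Set X) : Prop :=
  ∃ f : (ℝ × ℝ) → X, ContinuousOn f Disk2 ∧ Set.InjOn f Disk2 ∧
    f '' Disk2 = Δ ∧ Δ ⊆ V ∧ f '' Circle1 = Δ ∩ S ∧ f '' (Disk2 \ Circle1) ⊆ V \ S

/-- `Δ` is an essential disk in `V` (with `∂Δ = Δ ∩ S` an essential curve on `S`,
i.e. `∂Δ` bounds no disk in the surface `S`). -/
def IsEssentialDisk (Δ V S : Set X) : Prop :=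
  IsProperDisk Δ V S ∧ ¬ BoundsDiskIn (Δ ∩ S) S

/-- `A` and `B` are ambiently isotopic by an isotopy of `X` preserving `V` setwise. -/
def AmbIsotopicIn (A B V : Set X) : Prop :=
  ∃ F : ℝ → X ≃ₜ X, Continuous (fun p : ℝ × X => F p.1 p.2) ∧
    F 0 = Homeomorph.refl X ∧ (∀ t, (F t) '' V = V) ∧ (F 1) '' A = B

/-- The isotopy class of the curve `γ` bounds an essential disk in `V`
(i.e. `γ` is a vertex of the subcomplex `D_V(S)` of the disk complex). -/
def InDiskSet (γ V S : Set X) : Prop :=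
  ∃ γ' Δ, AmbIsotopicIn γ γ' S ∧ IsEssentialDisk Δ V S ∧ Δ ∩ S = γ'

/-- `γ` represents a vertex of the disk complex `D(S)` of the splitting surface `S`
of `M = V ∪_S W` : an essential simple closed curve in `S` bounding an essential
disk in `V` or in `W` (up to isotopy). -/
def IsVertex (γ V W S : Set X) : Prop :=
  IsSCC γ ∧ γ ⊆ S ∧ ¬ BoundsDiskIn γ S ∧ (InDiskSet γ V S ∨ InDiskSet γ W S)

/-- Chain of `n` pairwise tangent circles in the plane `z = 0` of `ℝ³`. -/
def chainCircles (n : ℕ) : Set ((ℝ × ℝ) × ℝ) :=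
  ⋃ i ∈ Finset.range n, {p | (p.1.1 - 2 * i) ^ 2 + p.1.2 ^ 2 = 1 ∧ p.2 = 0}

/-- A standard model of the genus `n` handlebody in `ℝ³`: a closed regular
neighborhood of a wedge of `n` circles (a closed ball if `n = 0`). -/
def ModelHandlebody (n : ℕ) : Set ((ℝ × ℝ) × ℝ) :=
  if n = 0 then Metric.closedBall 0 1 else Metric.cthickening (1 / 4) (chainCircles n)

/-- `A` is a handlebody of genus `n`. -/
def IsHandlebody (A : Set X) (n : ℕ) : Prop := Nonempty (A ≃ₜ ModelHandlebody n)

/-- The splitting surface `S` of `M = V ∪_S W` is critical: the vertices of the disk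
complex `D(S)` can be partitioned into `C0` and `C1` such that (1) for each `i` there is
a pair of disjoint essential disks on the two sides with boundaries in `C i`, and (2)
a disk in `D_V(S) ∩ C i` and a disk in `D_W(S) ∩ C (1-i)` always intersect,
for any representatives. -/
def IsCriticalSurface (V W S : Set X) : Prop :=
  ∃ C0 C1 : Set (Set X),
    Disjoint C0 C1 ∧
    (∀ γ, IsVertex γ V W S ↔ γ ∈ C0 ∪ C1) ∧
    (∃ ΔV ΔW, IsEssentialDisk ΔV V S ∧ IsEssentialDisk ΔW W S ∧
      (ΔV ∩ S) ∈ C0 ∧ (ΔW ∩ S) ∈ C0 ∧ Disjoint ΔV ΔW) ∧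
    (∃ ΔV ΔW, IsEssentialDisk ΔV V S ∧ IsEssentialDisk ΔW W S ∧
      (ΔV ∩ S) ∈ C1 ∧ (ΔW ∩ S) ∈ C1 ∧ Disjoint ΔV ΔW) ∧
    (∀ γV γW, γV ∈ C0 → InDiskSet γV V S → γW ∈ C1 → InDiskSet γW W S →
      ∀ γV' γW', AmbIsotopicIn γV γV' S → AmbIsotopicIn γW γW' S → ¬ Disjoint γV' γW') ∧
    (∀ γV γW, γV ∈ C1 → InDiskSet γV V S → γW ∈ C0 → InDiskSet γW W S →
      ∀ γV' γW', AmbIsotopicIn γV γV' S → AmbIsotopicIn γW γW' S → ¬ Disjoint γV' γW')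


/-- The 3-torus, as the quotient `ℝ³/(2ℤ)³` (i.e. the cube `[-1,1]³` with opposite
faces identified). -/
abbrev T3 : Type := AddCircle (2 : ℝ) × AddCircle (2 : ℝ) × AddCircle (2 : ℝ)

/-- The quotient map `q : ℝ³ → T³` (restricting to the cube `C = [-1,1]³`, it is the
map identifying the three pairs of opposite faces of `C`). -/
def qT : ℝ × ℝ × ℝ → T3 :=
  fun p => ((p.1 : AddCircle (2 : ℝ)), (p.2.1 : AddCircle (2 : ℝ)), (p.2.2 : AddCircle (2 : ℝ)))

/-- The cube `C = [-1,1]³`. -/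
def Cube : Set (ℝ × ℝ × ℝ) :=
  {p | p.1 ∈ Icc (-1 : ℝ) 1 ∧ p.2.1 ∈ Icc (-1 : ℝ) 1 ∧ p.2.2 ∈ Icc (-1 : ℝ) 1}

/-- The union of the three coordinate axes of `ℝ³`. -/
def Axes : Set (ℝ × ℝ × ℝ) :=
  {p | p.2.1 = 0 ∧ p.2.2 = 0} ∪ {p | p.1 = 0 ∧ p.2.2 = 0} ∪ {p | p.1 = 0 ∧ p.2.1 = 0}

/-- The genus three handlebody `V`: the image under `q` of a tubular neighborhood of
the union of the three axes in the cube. -/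
def Vh : Set T3 := qT '' (Metric.cthickening (1 / 4) Axes ∩ Cube)

/-- The Heegaard surface `S = ∂V`. -/
def Sh : Set T3 := frontier Vh

/-- The complementary genus three handlebody `W = cl(M - V)`. -/
def Wh : Set T3 := closure Vhᶜ

/-- The meridian disk `D = q({z = 1/2} ∩ C) ∩ V` of `V`. -/
def Dd : Set T3 := qT '' ({p | p.2.2 = 1 / 2} ∩ Cube) ∩ Vh

/-- The meridian disk `E = q({z = 0} ∩ C) ∩ W` of `W`. -/
def Ee : Set T3 := qT '' ({p | p.2.2 = 0} ∩ Cube) ∩ Wh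

/-- The meridian disk `D' = q({x = 1/2} ∩ C) ∩ V` of `V`. -/
def Dd' : Set T3 := qT '' ({p | p.1 = 1 / 2} ∩ Cube) ∩ Vh

/-- The meridian disk `E' = q({x = 0} ∩ C) ∩ W` of `W`. -/
def Ee' : Set T3 := qT '' ({p | p.1 = 0} ∩ Cube) ∩ Wh

/-- The quotient map `ℝ² → (flat torus)` for the square `[-1,1]²` with opposite
sides identified. -/
def qT2 : ℝ × ℝ → AddCircle (2 : ℝ) × AddCircle (2 : ℝ) :=
  fun p => ((p.1 : AddCircle (2 : ℝ)), (p.2 : AddCircle (2 : ℝ)))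

/-- A standard model of the once-punctured torus: the flat torus with an open
square disk removed. -/
def PuncTorusModel : Set (AddCircle (2 : ℝ) × AddCircle (2 : ℝ)) :=
  qT2 '' {p | p.1 ∈ Icc (-1 : ℝ) 1 ∧ p.2 ∈ Icc (-1 : ℝ) 1 ∧ (1 / 4 ≤ |p.1| ∨ 1 / 4 ≤ |p.2|)}

/-- `A` is a once-punctured torus. -/
def IsOncePuncturedTorus {X : Type*} [TopologicalSpace X] (A : Set X) : Prop :=
  Nonempty (A ≃ₜ PuncTorusModel)

/-- An open product neighborhood `D × (-1,1)` of the meridian disk `D ⊂ V`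
(at the level `z = 1/2`). -/
def NbhdD : Set T3 := qT '' ({p | 1 / 4 < p.2.2 ∧ p.2.2 < 3 / 4} ∩ Cube) ∩ Vh

/-- The result `V'` of cutting the handlebody `V` along the meridian disk `D`. -/
def Vcut : Set T3 := Vh \ NbhdD

/-- The boundary circle `∂E` of the meridian disk `E` of `W`. -/
def bdE : Set T3 := Ee ∩ Sh

/-! ### Compact spaces and fibres -/

section Fibres

variable {K L A B : Type*} [TopologicalSpace K] [TopologicalSpace L]
  [TopologicalSpace A] [T2Space A] [TopologicalSpace B] [T2Space B]

theorem isQuotientMap_rangeFactorization [CompactSpace K] {f : K → A} (hf : Continuous f) :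
    IsQuotientMap (rangeFactorization f) :=
  (hf.subtype_mk _).isClosedMap.isQuotientMap (hf.subtype_mk _) rangeFactorization_surjective

theorem nonempty_homeomorph_range_of_fibres [CompactSpace K] {f : K → A} {g : K → B}
    (hf : Continuous f) (hg : Continuous g) (h : ∀ a b, f a = f b ↔ g a = g b) :
    Nonempty (range f ≃ₜ range g) := by
  let F : C(K, range f) := ⟨rangeFactorization f, hf.subtype_mk _⟩
  let G : C(K, range g) := ⟨rangeFactorization g, hg.subtype_mk _⟩
  have hF : IsQuotientMap F := isQuotientMap_rangeFactorization hf
  have hG : IsQuotientMap G := isQuotientMap_rangeFactorization hg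
  have hker : Setoid.ker F = Setoid.ker G := Setoid.ext fun a b => by
    rw [Setoid.ker_def, Setoid.ker_def, Subtype.ext_iff, Subtype.ext_iff]
    exact h a b
  have eF := hF.homeomorph
  rw [hker] at eF
  exact ⟨eF.symm.trans hG.homeomorph⟩

theorem nonempty_homeomorph_image_of_fibres {s : Set K} (hs : IsCompact s) {f : K → A} {g : K → B}
    (hf : ContinuousOn f s) (hg : ContinuousOn g s)
    (h : ∀ a ∈ s, ∀ b ∈ s, f a = f b ↔ g a = g b) : Nonempty (f '' s ≃ₜ g '' s) := by
  have := isCompact_iff_compactSpace.1 hs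
  rw [← range_domRestrict f s, ← range_domRestrict g s]
  exact nonempty_homeomorph_range_of_fibres (continuousOn_iff_continuous_domRestrict.1 hf)
    (continuousOn_iff_continuous_domRestrict.1 hg) fun a b => h a a.2 b b.2

theorem nonempty_homeomorph_image_of_injOn {s : Set K} [T2Space K] (hs : IsCompact s) {f : K → A}
    (hf : ContinuousOn f s) (hinj : InjOn f s) : Nonempty (s ≃ₜ f '' s) := by
  have := nonempty_homeomorph_image_of_fibres hs continuousOn_id hf
    fun a ha b hb => (hinj.eq_iff ha hb).symm
  rwa [image_id] at this

theorem image_union_image_eq_range_sumElim {K L A : Type*} (f : K → A) (g : L → A) (s : Set K)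
    (t : Set L) : f '' s ∪ g '' t = range (Sum.elim (s.domRestrict f) (t.domRestrict g)) := by
  rw [Sum.elim_range, range_domRestrict, range_domRestrict]

theorem nonempty_homeomorph_union_of_fibres {s : Set K} {t : Set L} (hs : IsCompact s)
    (ht : IsCompact t) {f₁ : K → A} {f₂ : L → A} {g₁ : K → B} {g₂ : L → B}
    (hf₁ : ContinuousOn f₁ s) (hf₂ : ContinuousOn f₂ t)
    (hg₁ : ContinuousOn g₁ s) (hg₂ : ContinuousOn g₂ t)
    (h₁ : ∀ a ∈ s, ∀ b ∈ s, f₁ a = f₁ b ↔ g₁ a = g₁ b)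
    (h₂ : ∀ a ∈ t, ∀ b ∈ t, f₂ a = f₂ b ↔ g₂ a = g₂ b)
    (h₁₂ : ∀ a ∈ s, ∀ b ∈ t, f₁ a = f₂ b ↔ g₁ a = g₂ b) :
    Nonempty ((f₁ '' s ∪ f₂ '' t : Set A) ≃ₜ (g₁ '' s ∪ g₂ '' t : Set B)) := by
  have := isCompact_iff_compactSpace.1 hs
  have := isCompact_iff_compactSpace.1 ht
  rw [image_union_image_eq_range_sumElim, image_union_image_eq_range_sumElim]
  rw [continuousOn_iff_continuous_domRestrict] at hf₁ hf₂ hg₁ hg₂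
  refine nonempty_homeomorph_range_of_fibres (hf₁.sumElim hf₂) (hg₁.sumElim hg₂) ?_
  rintro (a | a) (b | b)
  · exact h₁ a a.2 b b.2
  · exact h₁₂ a a.2 b b.2
  · simpa only [Sum.elim_inl, Sum.elim_inr, domRestrict_apply, eq_comm] using h₁₂ b b.2 a a.2
  · exact h₂ a a.2 b b.2

end Fibres

/-! ### Radial maps -/

section Radial

variable {E : Type*} [NormedAddCommGroup E] [NormedSpace ℝ E]

/-- A continuous positively homogeneous function which is positive away from the origin: the
Minkowski functional of a compact star-shaped neighborhood of `0`. -/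
structure IsGauge (a : E → ℝ) : Prop where
  continuous : Continuous a
  smul : ∀ {t : ℝ}, 0 ≤ t → ∀ p, a (t • p) = t * a p
  pos : ∀ {p}, p ≠ 0 → 0 < a p

/-- The point on the ray through `p` at which the gauge `a` takes the value `r`. -/
def radial (a : E → ℝ) (r : ℝ) (p : E) : E := (r / a p) • p

theorem isGauge_norm : IsGauge (norm : E → ℝ) where
  continuous := continuous_norm
  smul h p := by rw [norm_smul, Real.norm_of_nonneg h]
  pos := norm_pos_iff.2

variable {a b : E → ℝ} {p q : E} {r s : ℝ}

theorem IsGauge.zero (ha : IsGauge a) : a 0 = 0 := by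
  simpa using ha.smul le_rfl 0

theorem IsGauge.nonneg (ha : IsGauge a) (p : E) : 0 ≤ a p := by
  rcases eq_or_ne p 0 with rfl | h
  exacts [ha.zero.ge, (ha.pos h).le]

theorem IsGauge.apply_radial (ha : IsGauge a) (hr : 0 ≤ r) (hp : p ≠ 0) : a (radial a r p) = r := by
  rw [radial, ha.smul (div_nonneg hr (ha.nonneg p)), div_mul_cancel₀ _ (ha.pos hp).ne']

theorem IsGauge.radial_smul (ha : IsGauge a) (hs : 0 < s) (p : E) :
    radial a r (s • p) = radial a r p := by
  rcases eq_or_ne p 0 with rfl | hp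
  · rw [smul_zero]
  have := (ha.pos hp).ne'
  rw [radial, ha.smul hs.le, smul_smul, radial]
  congr 1
  field_simp

theorem IsGauge.radial_radial (ha : IsGauge a) (hb : IsGauge b) (hs : 0 < s) (hp : p ≠ 0) :
    radial b r (radial a s p) = radial b r p :=
  hb.radial_smul (div_pos hs (ha.pos hp)) p

theorem IsGauge.radial_self (ha : IsGauge a) : radial a (a p) p = p := by
  rcases eq_or_ne p 0 with rfl | hp
  · exact smul_zero _
  · rw [radial, div_self (ha.pos hp).ne', one_smul]

theorem IsGauge.exists_norm_le [ProperSpace E] (ha : IsGauge a) :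
    ∃ C, 0 ≤ C ∧ ∀ p, ‖p‖ ≤ C * a p := by
  rcases subsingleton_or_nontrivial E with _ | _
  · exact ⟨0, le_rfl, fun p => by simp [Subsingleton.elim p 0]⟩
  obtain ⟨u, hu, hmin⟩ := (isCompact_sphere (0 : E) 1).exists_isMinOn
    ((NormedSpace.sphere_nonempty).2 zero_le_one) ha.continuous.continuousOn
  have hau : 0 < a u := ha.pos (ne_of_mem_sphere hu one_ne_zero)
  refine ⟨(a u)⁻¹, (inv_pos.2 hau).le, fun p => ?_⟩
  rcases eq_or_ne p 0 with rfl | hp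
  · simp [ha.zero]
  have hle : a u ≤ a (radial norm 1 p) :=
    hmin (mem_sphere_zero_iff_norm.2 (isGauge_norm.apply_radial zero_le_one hp))
  rw [radial, ha.smul (by positivity), div_mul_eq_mul_div, one_mul,
    le_div_iff₀ (norm_pos_iff.2 hp)] at hle
  rwa [inv_mul_eq_div, le_div_iff₀ hau, mul_comm]

theorem IsGauge.continuous_radial [ProperSpace E] {X : Type*} [TopologicalSpace X] {f : X → ℝ}
    {g : X → E} (ha : IsGauge a) (hf : Continuous f) (hg : Continuous g)
    (h : ∀ x, f x ≠ 0 → g x ≠ 0) : Continuous fun x => radial a (f x) (g x) := by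
  obtain ⟨C, hC₀, hC⟩ := ha.exists_norm_le
  have hbound (p : E) : ‖(a p)⁻¹ • p‖ ≤ C := by
    rw [norm_smul, norm_inv, Real.norm_of_nonneg (ha.nonneg p), inv_mul_eq_div]
    exact div_le_of_le_mul₀ (ha.nonneg p) hC₀ (hC p)
  simp only [radial, div_eq_mul_inv, mul_smul]
  refine continuous_iff_continuousAt.2 fun x => ?_
  by_cases hx : f x = 0
  · rw [ContinuousAt, hx, zero_smul]
    exact (hx ▸ hf.tendsto x).zero_smul_isBoundedUnder_le
      (Filter.isBoundedUnder_of ⟨C, fun y => hbound (g y)⟩)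
  · have hax : a (g x) ≠ 0 := (ha.pos (h x hx)).ne'
    exact hf.continuousAt.smul
      (((ha.continuous.comp hg).continuousAt.inv₀ hax).smul hg.continuousAt)

/-- The homeomorphism that fixes every ray and takes the gauge `a` to the gauge `b`. -/
def stretch (a b : E → ℝ) (p : E) : E := radial b (a p) p

theorem IsGauge.apply_stretch (ha : IsGauge a) (hb : IsGauge b) : b (stretch a b p) = a p := by
  rcases eq_or_ne p 0 with rfl | hp
  · simp [stretch, radial, ha.zero, hb.zero]
  · exact hb.apply_radial (ha.nonneg p) hp

theorem IsGauge.stretch_stretch (ha : IsGauge a) (hb : IsGauge b) :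
    stretch b a (stretch a b p) = p := by
  rcases eq_or_ne p 0 with rfl | hp
  · simp [stretch, radial]
  · rw [stretch, ha.apply_stretch hb, stretch, hb.radial_radial ha (ha.pos hp) hp, ha.radial_self]

theorem IsGauge.stretch_eq_self (ha : IsGauge a) (h : a p = b p) : stretch a b p = p := by
  rw [stretch, radial, ← h]
  exact ha.radial_self

theorem IsGauge.continuous_stretch [ProperSpace E] (ha : IsGauge a) (hb : IsGauge b) :
    Continuous (stretch a b) :=
  hb.continuous_radial ha.continuous continuous_id fun _ => mt fun h => h ▸ ha.zero

end Radial

/-! ### The circle `ℝ / pℤ` -/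

section Circle

variable {p x y : ℝ}

theorem addCircle_coe_eq_coe_iff : (x : AddCircle p) = y ↔ ∃ n : ℤ, x = y + n * p := by
  rw [← sub_eq_zero, ← AddCircle.coe_sub, AddCircle.coe_eq_zero_iff]
  simp only [zsmul_eq_mul, eq_sub_iff_add_eq, add_comm y, eq_comm (a := x)]

theorem eq_of_addCircle_coe_eq (hxy : |x - y| < p) (h : (x : AddCircle p) = y) : x = y := by
  obtain ⟨n, rfl⟩ := addCircle_coe_eq_coe_iff.1 h
  have hp : 0 < p := (abs_nonneg _).trans_lt hxy
  rw [add_sub_cancel_left, abs_mul, abs_of_pos hp, mul_lt_iff_lt_one_left hp] at hxy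
  have hn : n = 0 := Int.abs_lt_one_iff.1 (by exact_mod_cast hxy)
  simp [hn]

theorem min_abs_sub_abs_le_norm_coe (hp : 0 < p) (x : ℝ) :
    min |x| (p - |x|) ≤ ‖(x : AddCircle p)‖ := by
  rw [AddCircle.norm_eq]
  set n := round (p⁻¹ * x)
  rcases eq_or_ne n 0 with hn | hn
  · simp [hn]
  · have hn' : (1 : ℝ) ≤ |(n : ℝ)| := by exact_mod_cast Int.one_le_abs hn
    have hnp : p ≤ |n * p| := by
      rw [abs_mul, abs_of_pos hp]
      exact le_mul_of_one_le_left hp.le hn'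
    have := abs_sub_abs_le_abs_sub (n * p) x
    rw [abs_sub_comm] at this
    exact (min_le_right _ _).trans (by linarith)

theorem norm_coe_addCircle (hx : |x| ≤ p / 2) : ‖(x : AddCircle p)‖ = |x| := by
  rcases eq_or_ne p 0 with rfl | hp
  · exact AddCircle.norm_eq_of_zero
  · exact (AddCircle.norm_coe_eq_abs_iff p hp).2 (hx.trans (by gcongr; exact le_abs_self p))

theorem norm_coe_addCircle_le_abs (x : ℝ) : ‖(x : AddCircle p)‖ ≤ |x| :=
  QuotientAddGroup.norm_mk_le_norm

theorem norm_coe_addCircle_le_iff {r : ℝ} (hr : 0 ≤ r) (hx : |x| < p - r) :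
    ‖(x : AddCircle p)‖ ≤ r ↔ |x| ≤ r := by
  have hp : 0 < p := by linarith [abs_nonneg x]
  refine ⟨fun h => ?_, (norm_coe_addCircle_le_abs x).trans⟩
  exact (min_le_iff.1 ((min_abs_sub_abs_le_norm_coe hp x).trans h)).resolve_right (by linarith)

theorem norm_coe_addCircle_lt_iff {r : ℝ} (hr : 0 ≤ r) (hx : |x| < p - r) :
    ‖(x : AddCircle p)‖ < r ↔ |x| < r := by
  have hp : 0 < p := by linarith [abs_nonneg x]
  refine ⟨fun h => ?_, (norm_coe_addCircle_le_abs x).trans_lt⟩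
  exact (min_lt_iff.1 ((min_abs_sub_abs_le_norm_coe hp x).trans_lt h)).resolve_right (by linarith)

theorem exists_coe_addCircle (hp : 0 < p) (a : ℝ) (x : AddCircle p) :
    ∃ t ∈ Ico a (a + p), (t : AddCircle p) = x := by
  have : Fact (0 < p) := ⟨hp⟩
  exact ⟨_, (AddCircle.equivIco p a x).2, AddCircle.coe_equivIco⟩

theorem exists_abs_le_coe_addCircle (hp : 0 < p) (x : AddCircle p) :
    ∃ t : ℝ, |t| ≤ p / 2 ∧ (t : AddCircle p) = x := by
  obtain ⟨t, ⟨h₁, h₂⟩, rfl⟩ := exists_coe_addCircle hp (-(p / 2)) x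
  exact ⟨t, abs_le.2 ⟨h₁, by linarith⟩, rfl⟩

theorem addCircle_coe_half_eq_neg : ((p / 2 : ℝ) : AddCircle p) = ((-(p / 2) : ℝ) : AddCircle p) :=
  addCircle_coe_eq_coe_iff.2 ⟨1, by push_cast; ring⟩

theorem addCircle_coe_eq_coe_iff_of_abs_le (hx : |x| ≤ p / 2) (hy : |y| ≤ p / 2) :
    (x : AddCircle p) = y ↔ x = y ∨ |x| = p / 2 ∧ |y| = p / 2 := by
  constructor
  · intro h
    rcases lt_or_ge |x - y| p with hxy | hxy
    · exact Or.inl (eq_of_addCircle_coe_eq hxy h)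
    · have := abs_sub x y
      exact Or.inr ⟨by linarith, by linarith⟩
  · rintro (rfl | ⟨h₁, h₂⟩)
    · rfl
    · rcases eq_or_eq_neg_of_abs_eq h₁ with rfl | rfl <;>
        rcases eq_or_eq_neg_of_abs_eq h₂ with rfl | rfl <;>
        simp only [addCircle_coe_half_eq_neg]

theorem norm_add_half_period (hp : 0 < p) (x : AddCircle p) :
    ‖x + ((p / 2 : ℝ) : AddCircle p)‖ = p / 2 - ‖x‖ := by
  obtain ⟨t, ht, rfl⟩ := exists_abs_le_coe_addCircle hp x
  rw [norm_coe_addCircle ht]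
  rcases le_total t 0 with h | h
  · rw [abs_of_nonpos h] at ht ⊢
    rw [← AddCircle.coe_add, norm_coe_addCircle] <;> rw [abs_of_nonneg] <;> linarith
  · rw [abs_of_nonneg h] at ht ⊢
    rw [addCircle_coe_half_eq_neg, ← AddCircle.coe_add, norm_coe_addCircle] <;>
      rw [abs_of_nonpos] <;> linarith

theorem interior_closedBall_addCircle {r : ℝ} (hr : 0 < r) (hrp : r < p / 2) :
    interior (closedBall (0 : AddCircle p) r) = ball 0 r := by
  refine subset_antisymm (fun x hx => ?_) ball_subset_interior_closedBall
  obtain ⟨t, ht, rfl⟩ := exists_abs_le_coe_addCircle (by linarith) x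
  have hball : closedBall (0 : ℝ) (p / 2) ⊆ ball 0 (p - r) := closedBall_subset_ball (by linarith)
  have ht' : t ∈ ball (0 : ℝ) (p - r) := hball (mem_closedBall_zero_iff.2 ht)
  have hcoe : (fun s : ℝ => (s : AddCircle p)) ⁻¹' closedBall 0 r ∩ ball 0 (p - r) ⊆
      closedBall 0 r := fun s ⟨hs, hs'⟩ => by
    rw [mem_preimage, mem_closedBall_zero_iff] at hs
    rw [mem_ball_zero_iff] at hs'
    exact mem_closedBall_zero_iff.2 ((norm_coe_addCircle_le_iff hr.le hs').1 hs)
  have hint : t ∈ interior (closedBall (0 : ℝ) r) := by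
    refine interior_mono hcoe ?_
    rw [interior_inter, isOpen_ball.interior_eq]
    exact ⟨preimage_interior_subset_interior_preimage (AddCircle.continuous_mk' p) hx, ht'⟩
  rw [interior_closedBall _ hr.ne', mem_ball_zero_iff] at hint
  exact mem_ball_zero_iff.2 ((norm_coe_addCircle_le_abs t).trans_lt hint)

end Circle

/-! ### The handlebody and its cut -/

section AtLeastTwo

variable {Y : Type*}

/-- The triples at least two of whose coordinates lie in `A`. -/
def atLeastTwo (A : Set Y) : Set (Y × Y × Y) :=
  {t | t.2.1 ∈ A ∧ t.2.2 ∈ A ∨ t.1 ∈ A ∧ t.2.2 ∈ A ∨ t.1 ∈ A ∧ t.2.1 ∈ A}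

theorem atLeastTwo_eq_inter (A : Set Y) :
    atLeastTwo A = (Prod.map id Prod.fst ⁻¹' (Aᶜ ×ˢ Aᶜ)ᶜ ∩ Prod.map id Prod.snd ⁻¹' (Aᶜ ×ˢ Aᶜ)ᶜ) ∩
      Prod.snd ⁻¹' (Aᶜ ×ˢ Aᶜ)ᶜ := by
  ext ⟨x, y, z⟩
  simp only [atLeastTwo, mem_ofPred_eq, mem_inter_iff, mem_preimage, mem_compl_iff, mem_prod,
    Prod.map, id]
  tauto

variable [TopologicalSpace Y]

theorem interior_compl_prod_compl (A : Set Y) :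
    interior (Aᶜ ×ˢ Aᶜ)ᶜ = ((interior A)ᶜ ×ˢ (interior A)ᶜ)ᶜ := by
  rw [interior_compl, closure_prod_eq, closure_compl]

theorem interior_atLeastTwo (A : Set Y) : interior (atLeastTwo A) = atLeastTwo (interior A) := by
  have h₁ : IsOpenMap (Prod.map id Prod.fst : Y × Y × Y → Y × Y) :=
    IsOpenMap.id.prodMap isOpenMap_fst
  have h₂ : IsOpenMap (Prod.map id Prod.snd : Y × Y × Y → Y × Y) :=
    IsOpenMap.id.prodMap isOpenMap_snd
  simp only [atLeastTwo_eq_inter, interior_inter,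
    ← h₁.preimage_interior_eq_interior_preimage (by fun_prop),
    ← h₂.preimage_interior_eq_interior_preimage (by fun_prop),
    ← isOpenMap_snd.preimage_interior_eq_interior_preimage continuous_snd,
    interior_compl_prod_compl]

theorem isClosed_atLeastTwo {A : Set Y} (hA : IsClosed A) : IsClosed (atLeastTwo A) := by
  have h (i : Y × Y × Y → Y) (hi : Continuous i) : IsClosed {t | i t ∈ A} := hA.preimage hi
  exact ((h _ (by fun_prop)).inter (h _ (by fun_prop))).union
    (((h _ (by fun_prop)).inter (h _ (by fun_prop))).union
      ((h _ (by fun_prop)).inter (h _ (by fun_prop))))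

end AtLeastTwo

theorem cthickening_axes : cthickening (1 / 4) Axes = atLeastTwo (closedBall (0 : ℝ) (1 / 4)) := by
  have hclosed : IsClosed Axes := by
    refine (IsClosed.union ?_ ?_).union ?_ <;>
      exact (isClosed_eq (by fun_prop) (by fun_prop)).inter
        (isClosed_eq (by fun_prop) (by fun_prop))
  rw [hclosed.cthickening_eq_biUnion_closedBall (by norm_num)]
  ext ⟨x, y, z⟩
  simp only [mem_iUnion, mem_closedBall, Prod.dist_eq, exists_prop, Prod.exists, atLeastTwo,
    max_le_iff, mem_ofPred_eq]
  constructor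
  · rintro ⟨a, b, c, (⟨rfl, rfl⟩ | ⟨rfl, rfl⟩) | ⟨rfl, rfl⟩, hx, hy, hz⟩ <;> simp_all
  · rintro (h | h | h)
    · exact ⟨x, 0, 0, .inl (.inl ⟨rfl, rfl⟩), by simp, h⟩
    · exact ⟨0, y, 0, .inl (.inr ⟨rfl, rfl⟩), h.1, by simp, h.2⟩
    · exact ⟨0, 0, z, .inr ⟨rfl, rfl⟩, h.1, h.2, by simp⟩

theorem norm_coe_of_abs_le_one {x : ℝ} (hx : |x| ≤ 1) : ‖(x : AddCircle (2 : ℝ))‖ = |x| :=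
  norm_coe_addCircle (by simpa using hx)

theorem exists_abs_le_one_coe (x : AddCircle (2 : ℝ)) :
    ∃ t : ℝ, |t| ≤ 1 ∧ (t : AddCircle (2 : ℝ)) = x := by
  simpa using exists_abs_le_coe_addCircle two_pos x

theorem exists_mem_cube_qT (t : T3) : ∃ p ∈ Cube, qT p = t := by
  obtain ⟨x, hx, hx'⟩ := exists_abs_le_one_coe t.1
  obtain ⟨y, hy, hy'⟩ := exists_abs_le_one_coe t.2.1
  obtain ⟨z, hz, hz'⟩ := exists_abs_le_one_coe t.2.2
  exact ⟨(x, y, z), ⟨abs_le.1 hx, abs_le.1 hy, abs_le.1 hz⟩, by simp [qT, hx', hy', hz']⟩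

theorem qT_mem_atLeastTwo_closedBall {p : ℝ × ℝ × ℝ} (hp : p ∈ Cube) (r : ℝ) :
    qT p ∈ atLeastTwo (closedBall 0 r) ↔ p ∈ atLeastTwo (closedBall 0 r) := by
  simp only [qT, atLeastTwo, mem_ofPred_eq, mem_closedBall_zero_iff, Real.norm_eq_abs,
    norm_coe_of_abs_le_one (abs_le.2 hp.1), norm_coe_of_abs_le_one (abs_le.2 hp.2.1),
    norm_coe_of_abs_le_one (abs_le.2 hp.2.2)]

theorem Vh_eq : Vh = atLeastTwo (closedBall 0 (1 / 4)) := by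
  rw [Vh, cthickening_axes]
  refine subset_antisymm ?_ fun t ht => ?_
  · rintro _ ⟨p, ⟨hp, hcube⟩, rfl⟩
    exact (qT_mem_atLeastTwo_closedBall hcube _).2 hp
  · obtain ⟨p, hcube, rfl⟩ := exists_mem_cube_qT t
    exact ⟨p, ⟨(qT_mem_atLeastTwo_closedBall hcube _).1 ht, hcube⟩, rfl⟩

theorem mem_qT_slab_iff (t : T3) :
    t ∈ qT '' ({p | 1 / 4 < p.2.2 ∧ p.2.2 < 3 / 4} ∩ Cube) ↔
      ‖t.2.2 - ((1 / 2 : ℝ) : AddCircle (2 : ℝ))‖ < 1 / 4 := by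
  have hslab {p : ℝ × ℝ × ℝ} (hp : p ∈ Cube) :
      ‖(qT p).2.2 - ((1 / 2 : ℝ) : AddCircle (2 : ℝ))‖ < 1 / 4 ↔ 1 / 4 < p.2.2 ∧ p.2.2 < 3 / 4 := by
    have hz := hp.2.2
    rw [qT, ← AddCircle.coe_sub, norm_coe_addCircle_lt_iff (by norm_num), abs_lt]
    · constructor <;> intro h <;> constructor <;> linarith
    · rw [abs_lt]
      constructor <;> linarith [hz.1, hz.2]
  constructor
  · rintro ⟨p, ⟨hp, hcube⟩, rfl⟩
    exact (hslab hcube).2 hp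
  · obtain ⟨p, hcube, rfl⟩ := exists_mem_cube_qT t
    exact fun h => ⟨p, ⟨(hslab hcube).1 h, hcube⟩, rfl⟩

/-- The points of `T³` whose last coordinate, measured from `-1/2`, lies in `A`. Thus `V'` is the
part of `V` in a slab of radius `3/4`. -/
def slab (A : Set (AddCircle (2 : ℝ))) : Set T3 :=
  (fun t => t.2.2 + ((1 / 2 : ℝ) : AddCircle (2 : ℝ))) ⁻¹' A

theorem Vcut_eq : Vcut = atLeastTwo (closedBall 0 (1 / 4)) ∩ slab (closedBall 0 (3 / 4)) := by
  ext t
  have hshift := norm_add_half_period two_pos (t.2.2 - ((1 / 2 : ℝ) : AddCircle (2 : ℝ)))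
  rw [sub_add_eq_add_sub, add_sub_assoc, ← AddCircle.coe_sub] at hshift
  norm_num only at hshift
  simp only [Vcut, NbhdD, mem_sdiff, mem_inter_iff, mem_qT_slab_iff, Vh_eq, slab, mem_preimage,
    mem_closedBall_zero_iff, hshift]
  grind

theorem interior_slab (A : Set (AddCircle (2 : ℝ))) : interior (slab A) = slab (interior A) := by
  have hopen : IsOpenMap fun t : T3 => t.2.2 + ((1 / 2 : ℝ) : AddCircle (2 : ℝ)) :=
    (Homeomorph.addRight _).isOpenMap.comp (isOpenMap_snd.comp isOpenMap_snd)
  exact (hopen.preimage_interior_eq_interior_preimage (by fun_prop) A).symm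

theorem isClosed_Vcut : IsClosed Vcut := by
  rw [Vcut_eq]
  exact (isClosed_atLeastTwo isClosed_closedBall).inter (isClosed_closedBall.preimage (by fun_prop))

theorem interior_Vcut : interior Vcut = atLeastTwo (ball 0 (1 / 4)) ∩ slab (ball 0 (3 / 4)) := by
  rw [Vcut_eq, interior_inter, interior_atLeastTwo, interior_slab,
    interior_closedBall_addCircle (by norm_num) (by norm_num),
    interior_closedBall_addCircle (by norm_num) (by norm_num)]

/-! ### The frontier of the cut handlebody -/

/-- The subset of `T³` cut out by a condition on the norms of the first two coordinates and a real
representative of the third. -/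
def normRegion (P : ℝ → ℝ → ℝ → Prop) : Set T3 :=
  {t | ∃ z : ℝ, P ‖t.1‖ ‖t.2.1‖ z ∧ (z : AddCircle (2 : ℝ)) = t.2.2}

theorem mem_normRegion_coe_iff {P : ℝ → ℝ → ℝ → Prop} {c : ℝ}
    (hP : ∀ a b z, P a b z → z ∈ Ico c (c + 2)) {z : ℝ} (hz : z ∈ Ico c (c + 2))
    (x y : AddCircle (2 : ℝ)) :
    ((x, y, (z : AddCircle (2 : ℝ))) : T3) ∈ normRegion P ↔ P ‖x‖ ‖y‖ z := by
  refine ⟨fun ⟨z', h, hz'⟩ => ?_, fun h => ⟨z, h, rfl⟩⟩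
  obtain rfl : z' = z := by
    have h' := hP _ _ _ h
    have hlt : |z' - z| < 2 := abs_lt.2 ⟨by linarith [h'.1, hz.2], by linarith [h'.2, hz.1]⟩
    exact eq_of_addCircle_coe_eq hlt hz'
  exact h

theorem normRegion_ext {P : ℝ → ℝ → ℝ → Prop} {s : Set T3} (c : ℝ)
    (hP : ∀ a b z, P a b z → z ∈ Ico c (c + 2))
    (h : ∀ x y : AddCircle (2 : ℝ), ∀ z ∈ Ico c (c + 2),
      ((x, y, (z : AddCircle (2 : ℝ))) : T3) ∈ s ↔ P ‖x‖ ‖y‖ z) : s = normRegion P := by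
  ext ⟨x, y, z⟩
  obtain ⟨z, hz, rfl⟩ := exists_coe_addCircle two_pos c z
  rw [h x y z hz, mem_normRegion_coe_iff hP hz]

/-- The cross `min a b ≤ 1/4`, thickened to `|z| ≤ 1/4`, with the finger `max a b ≤ 1/4` below. -/
def VcutProfile (a b z : ℝ) : Prop :=
  z ∈ Icc (-5 / 4) (1 / 4) ∧ ((a ≤ 1 / 4 ∨ b ≤ 1 / 4) ∧ -1 / 4 ≤ z ∨ a ≤ 1 / 4 ∧ b ≤ 1 / 4)

/-- The top of the thickened cross and the upper half of its vertical sides. -/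
def T1Profile (a b z : ℝ) : Prop :=
  z = 1 / 4 ∧ min a b ≤ 1 / 4 ∨ z ∈ Icc 0 (1 / 4) ∧ min a b = 1 / 4

/-- The lower half of the vertical sides of the thickened cross, its bottom outside the finger, the
vertical sides of the finger, and the bottom of the finger. -/
def T2Profile (a b z : ℝ) : Prop :=
  z ∈ Icc (-1 / 4) 0 ∧ min a b = 1 / 4 ∨ z = -1 / 4 ∧ min a b ≤ 1 / 4 ∧ 1 / 4 ≤ max a b ∨
    z ∈ Icc (-5 / 4) (-1 / 4) ∧ max a b = 1 / 4 ∨ z = -5 / 4 ∧ max a b ≤ 1 / 4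

theorem mem_Vcut_iff (x y : AddCircle (2 : ℝ)) {z : ℝ} (hz : z ∈ Ico (-3 / 2 : ℝ) (-3 / 2 + 2)) :
    ((x, y, (z : AddCircle (2 : ℝ))) : T3) ∈ Vcut ↔ VcutProfile ‖x‖ ‖y‖ z := by
  have h₁ : |z| < 2 - 1 / 4 := abs_lt.2 ⟨by linarith [hz.1], by linarith [hz.2]⟩
  have h₂ : |z + 1 / 2| ≤ 1 := abs_le.2 ⟨by linarith [hz.1], by linarith [hz.2]⟩
  simp only [Vcut_eq, slab, atLeastTwo, mem_inter_iff, mem_ofPred_eq, mem_preimage,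
    mem_closedBall_zero_iff, ← AddCircle.coe_add, norm_coe_of_abs_le_one h₂,
    norm_coe_addCircle_le_iff (by norm_num) h₁, VcutProfile, abs_le, mem_Icc]
  grind

theorem mem_interior_Vcut_iff (x y : AddCircle (2 : ℝ)) {z : ℝ}
    (hz : z ∈ Ico (-3 / 2 : ℝ) (-3 / 2 + 2)) :
    ((x, y, (z : AddCircle (2 : ℝ))) : T3) ∈ interior Vcut ↔ z ∈ Ioo (-5 / 4 : ℝ) (1 / 4) ∧
      ((‖x‖ < 1 / 4 ∨ ‖y‖ < 1 / 4) ∧ -1 / 4 < z ∨ ‖x‖ < 1 / 4 ∧ ‖y‖ < 1 / 4) := by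
  have h₁ : |z| < 2 - 1 / 4 := abs_lt.2 ⟨by linarith [hz.1], by linarith [hz.2]⟩
  have h₂ : |z + 1 / 2| ≤ 1 := abs_le.2 ⟨by linarith [hz.1], by linarith [hz.2]⟩
  simp only [interior_Vcut, slab, atLeastTwo, mem_inter_iff, mem_ofPred_eq, mem_preimage,
    mem_ball_zero_iff, ← AddCircle.coe_add, norm_coe_of_abs_le_one h₂,
    norm_coe_addCircle_lt_iff (by norm_num) h₁, abs_lt, mem_Ioo]
  grind

theorem VcutProfile.mem_Ico {a b z : ℝ} (h : VcutProfile a b z) :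
    z ∈ Ico (-3 / 2 : ℝ) (-3 / 2 + 2) := by
  constructor <;> linarith [h.1.1, h.1.2]

theorem Vcut_eq_normRegion : Vcut = normRegion VcutProfile :=
  normRegion_ext (-3 / 2) (fun _ _ _ h => h.mem_Ico) fun x y _ hz => mem_Vcut_iff x y hz

theorem normRegion_or (P Q : ℝ → ℝ → ℝ → Prop) :
    normRegion P ∪ normRegion Q = normRegion fun a b z => P a b z ∨ Q a b z := by
  ext t
  simp only [normRegion, mem_union, mem_ofPred_eq, ← exists_or, ← or_and_right]

theorem T1Profile.mem_Icc {a b z : ℝ} (h : T1Profile a b z) : z ∈ Icc (0 : ℝ) (1 / 4) := by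
  rcases h with ⟨rfl, -⟩ | ⟨h, -⟩
  exacts [⟨by norm_num, le_rfl⟩, h]

theorem T2Profile.mem_Icc {a b z : ℝ} (h : T2Profile a b z) : z ∈ Icc (-5 / 4 : ℝ) 0 := by
  rcases h with ⟨h, -⟩ | ⟨rfl, -⟩ | ⟨h, -⟩ | ⟨rfl, -⟩
  exacts [⟨by linarith [h.1], h.2⟩, by norm_num, ⟨h.1, by linarith [h.2]⟩, by norm_num]

theorem T1Profile.mem_Ico {a b z : ℝ} (h : T1Profile a b z) :
    z ∈ Ico (-3 / 2 : ℝ) (-3 / 2 + 2) := by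
  constructor <;> linarith [h.mem_Icc.1, h.mem_Icc.2]

theorem T2Profile.mem_Ico {a b z : ℝ} (h : T2Profile a b z) :
    z ∈ Ico (-3 / 2 : ℝ) (-3 / 2 + 2) := by
  constructor <;> linarith [h.mem_Icc.1, h.mem_Icc.2]

theorem T1_union_T2 : normRegion T1Profile ∪ normRegion T2Profile = frontier Vcut := by
  rw [normRegion_or, eq_comm]
  refine normRegion_ext (-3 / 2) ?_ fun x y z hz => ?_
  · rintro a b z (h | h)
    exacts [h.mem_Ico, h.mem_Ico]
  · rw [isClosed_Vcut.frontier_eq, mem_sdiff, mem_Vcut_iff x y hz, mem_interior_Vcut_iff x y hz]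
    simp only [VcutProfile, T1Profile, T2Profile, mem_Icc, mem_Ioo]
    rcases le_total ‖x‖ ‖y‖ with h | h <;>
      simp only [min_eq_left, min_eq_right, max_eq_left, max_eq_right, h] <;>
      grind (splits := 30)

theorem bdE_eq : bdE = {t : T3 | t.2.2 = 0} ∩ frontier Vh := by
  have hW : frontier Vh ⊆ Wh := by
    rw [frontier_eq_closure_inter_closure]
    exact inter_subset_right
  have hE : qT '' ({p | p.2.2 = 0} ∩ Cube) = {t : T3 | t.2.2 = 0} := by
    refine subset_antisymm ?_ ?_
    · rintro _ ⟨p, ⟨hp, -⟩, rfl⟩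
      exact congrArg _ hp
    · rintro ⟨x, y, z⟩ (hz : z = 0)
      obtain ⟨x, hx, rfl⟩ := exists_abs_le_one_coe x
      obtain ⟨y, hy, rfl⟩ := exists_abs_le_one_coe y
      exact ⟨(x, y, 0), ⟨rfl, abs_le.1 hx, abs_le.1 hy, by norm_num⟩, by rw [hz]; rfl⟩
  rw [bdE, Ee, Sh, hE, inter_assoc, inter_eq_right.2 hW]

theorem mem_bdE_iff (x y : AddCircle (2 : ℝ)) {z : ℝ} (hz : |z| < 2) :
    ((x, y, (z : AddCircle (2 : ℝ))) : T3) ∈ bdE ↔ z = 0 ∧ min ‖x‖ ‖y‖ = 1 / 4 := by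
  have hz' : (z : AddCircle (2 : ℝ)) = 0 ↔ z = 0 :=
    ⟨fun h => eq_of_addCircle_coe_eq (p := 2) (by rwa [sub_zero]) h, fun h => h ▸ rfl⟩
  rw [bdE_eq, Vh_eq, (isClosed_atLeastTwo isClosed_closedBall).frontier_eq, interior_atLeastTwo,
    interior_closedBall_addCircle (by norm_num) (by norm_num), mem_inter_iff, mem_ofPred_eq, hz']
  refine and_congr_right fun h => ?_
  subst h
  simp only [atLeastTwo, mem_sdiff, mem_ofPred_eq, mem_closedBall_zero_iff, mem_ball_zero_iff,
    AddCircle.coe_zero, norm_zero]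
  grind

theorem T1_inter_T2 : normRegion T1Profile ∩ normRegion T2Profile = bdE := by
  ext ⟨x, y, z⟩
  obtain ⟨z, hz, rfl⟩ := exists_coe_addCircle two_pos (-3 / 2) z
  have hz' : |z| < 2 := abs_lt.2 ⟨by linarith [hz.1], by linarith [hz.2]⟩
  rw [mem_inter_iff, mem_normRegion_coe_iff (fun _ _ _ => T1Profile.mem_Ico) hz,
    mem_normRegion_coe_iff (fun _ _ _ => T2Profile.mem_Ico) hz, mem_bdE_iff x y hz']
  simp only [T1Profile, T2Profile, mem_Icc]
  grind

/-! ### Pushing the finger into the cross -/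

/-- The part of `[-1, 1]² × ℝ` lying over `normRegion P`. -/
def normLift (P : ℝ → ℝ → ℝ → Prop) : Set (ℝ × ℝ × ℝ) :=
  {p | |p.1| ≤ 1 ∧ |p.2.1| ≤ 1 ∧ P |p.1| |p.2.1| p.2.2}

theorem image_qT_normLift (P : ℝ → ℝ → ℝ → Prop) : qT '' normLift P = normRegion P := by
  refine subset_antisymm ?_ ?_
  · rintro _ ⟨⟨x, y, z⟩, ⟨hx, hy, h⟩, rfl⟩
    exact ⟨z, by rwa [qT, norm_coe_of_abs_le_one hx, norm_coe_of_abs_le_one hy], rfl⟩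
  · rintro ⟨x, y, _⟩ ⟨z, h, rfl⟩
    obtain ⟨x, hx, rfl⟩ := exists_abs_le_one_coe x
    obtain ⟨y, hy, rfl⟩ := exists_abs_le_one_coe y
    rw [norm_coe_of_abs_le_one hx, norm_coe_of_abs_le_one hy] at h
    exact ⟨(x, y, z), ⟨hx, hy, h⟩, rfl⟩

theorem continuous_qT : Continuous qT := by
  have := AddCircle.continuous_mk' (2 : ℝ)
  unfold qT
  fun_prop

theorem eq_of_coe_eq_of_abs_lt_one {x y : ℝ} (hx : |x| < 1) (hy : |y| ≤ 1)
    (h : (x : AddCircle (2 : ℝ)) = y) : x = y :=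
  eq_of_addCircle_coe_eq ((abs_sub x y).trans_lt (by linarith)) h

/-- The gauge whose unit ball is the box `[-1, 1]² × [-1/c, 1/c]`. -/
def boxGauge (c : ℝ) (p : ℝ × ℝ × ℝ) : ℝ := max (max |p.1| |p.2.1|) (c * |p.2.2|)

theorem isGauge_boxGauge {c : ℝ} (hc : 0 < c) : IsGauge (boxGauge c) where
  continuous := by unfold boxGauge; fun_prop
  smul {t} ht p := by
    simp only [boxGauge, Prod.smul_fst, Prod.smul_snd, smul_eq_mul, abs_mul, abs_of_nonneg ht,
      mul_max_of_nonneg _ _ ht, mul_left_comm c t]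
  pos {p} hp := by
    contrapose! hp
    simp only [boxGauge, max_le_iff, abs_nonpos_iff] at hp
    have h := abs_nonpos_iff.1 (nonpos_of_mul_nonpos_right hp.2 hc)
    exact Prod.ext hp.1.1 (Prod.ext hp.1.2 h)

/-- The radial stretch about the centre `(0, 0, 1/4)` of the top of the finger that takes
`[-1/4, 1/4]² × [-1/4, 1/4]` to `[-1/4, 1/4]² × [-5/4, 1/4]`. -/
def fingerStretch (p : ℝ × ℝ × ℝ) : ℝ × ℝ × ℝ :=
  stretch (boxGauge (1 / 2)) (boxGauge (1 / 6)) (p - (0, 0, 1 / 4)) + (0, 0, 1 / 4)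

/-- The inverse of `fingerStretch`. -/
def fingerShrink (p : ℝ × ℝ × ℝ) : ℝ × ℝ × ℝ :=
  stretch (boxGauge (1 / 6)) (boxGauge (1 / 2)) (p - (0, 0, 1 / 4)) + (0, 0, 1 / 4)

theorem isGauge_boxGauge_half : IsGauge (boxGauge (1 / 2)) := isGauge_boxGauge (by norm_num)

theorem isGauge_boxGauge_sixth : IsGauge (boxGauge (1 / 6)) := isGauge_boxGauge (by norm_num)

theorem continuous_fingerStretch : Continuous fingerStretch := by
  have := isGauge_boxGauge_half.continuous_stretch isGauge_boxGauge_sixth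
  unfold fingerStretch
  fun_prop

theorem fingerStretch_fingerShrink (p : ℝ × ℝ × ℝ) : fingerStretch (fingerShrink p) = p := by
  rw [fingerStretch, fingerShrink, add_sub_cancel_right,
    isGauge_boxGauge_sixth.stretch_stretch isGauge_boxGauge_half, sub_add_cancel]

theorem fingerShrink_fingerStretch (p : ℝ × ℝ × ℝ) : fingerShrink (fingerStretch p) = p := by
  rw [fingerStretch, fingerShrink, add_sub_cancel_right,
    isGauge_boxGauge_half.stretch_stretch isGauge_boxGauge_sixth, sub_add_cancel]

/-- The cone below the centre of the top of the finger outside which the finger is not stretched. -/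
def fingerCone : Set (ℝ × ℝ × ℝ) := {p | 2 * max |p.1| |p.2.1| < 1 / 4 - p.2.2}

theorem exists_fingerStretch_eq (p : ℝ × ℝ × ℝ) : ∃ t : ℝ, 0 < t ∧
    fingerStretch p = (t * p.1, t * p.2.1, t * (p.2.2 - 1 / 4) + 1 / 4) := by
  suffices ∃ t : ℝ, 0 < t ∧ fingerStretch p = t • (p - (0, 0, 1 / 4)) + (0, 0, 1 / 4) by
    obtain ⟨t, ht, h⟩ := this
    exact ⟨t, ht, by simp [h, Prod.ext_iff]⟩
  rcases eq_or_ne (p - (0, 0, 1 / 4)) 0 with h | h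
  · exact ⟨1, one_pos, by rw [fingerStretch, h, stretch, radial, smul_zero, smul_zero]⟩
  · exact ⟨_, div_pos (isGauge_boxGauge_half.pos h) (isGauge_boxGauge_sixth.pos h), rfl⟩

theorem fingerStretch_mem_fingerCone_iff (p : ℝ × ℝ × ℝ) :
    fingerStretch p ∈ fingerCone ↔ p ∈ fingerCone := by
  obtain ⟨t, ht, h⟩ := exists_fingerStretch_eq p
  have key : 2 * (t * max |p.1| |p.2.1|) < 1 / 4 - (t * (p.2.2 - 1 / 4) + 1 / 4) ↔
      t * (2 * max |p.1| |p.2.1|) < t * (1 / 4 - p.2.2) := by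
    constructor <;> intro h <;> linarith
  simp only [fingerCone, mem_ofPred_eq, h, abs_mul, abs_of_pos ht, ← mul_max_of_nonneg _ _ ht.le]
  rw [key, mul_lt_mul_iff_right₀ ht]

theorem fingerStretch_snd_snd_le_iff (p : ℝ × ℝ × ℝ) :
    (fingerStretch p).2.2 ≤ 1 / 4 ↔ p.2.2 ≤ 1 / 4 := by
  obtain ⟨t, ht, h⟩ := exists_fingerStretch_eq p
  rw [h, add_le_iff_nonpos_left, mul_nonpos_iff_pos_imp_nonpos]
  simp [ht, ht.le]

theorem fingerStretch_eq_self {p : ℝ × ℝ × ℝ} (hp : p ∉ fingerCone) (hz : p.2.2 ≤ 1 / 4) :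
    fingerStretch p = p := by
  have h : |p.2.2 - 1 / 4| ≤ 2 * max |p.1| |p.2.1| := by
    rw [abs_of_nonpos (by linarith)]
    linarith [not_lt.1 (show ¬2 * max |p.1| |p.2.1| < 1 / 4 - p.2.2 from hp)]
  rw [fingerStretch, isGauge_boxGauge_half.stretch_eq_self, sub_add_cancel]
  simp only [boxGauge, Prod.fst_sub, Prod.snd_sub, sub_zero]
  rw [max_eq_left (b := 1 / 2 * _), max_eq_left (b := 1 / 6 * _)] <;>
    linarith [abs_nonneg (p.2.2 - 1 / 4)]

theorem boxGauge_fingerStretch (p : ℝ × ℝ × ℝ) :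
    boxGauge (1 / 6) (fingerStretch p - (0, 0, 1 / 4)) = boxGauge (1 / 2) (p - (0, 0, 1 / 4)) := by
  rw [fingerStretch, add_sub_cancel_right,
    isGauge_boxGauge_half.apply_stretch isGauge_boxGauge_sixth]

theorem image_fingerStretch_normLift {P Q : ℝ → ℝ → ℝ → Prop} {I : Set ℝ}
    (hP : ∀ p ∈ fingerCone, p ∈ normLift P ↔ boxGauge (1 / 2) (p - (0, 0, 1 / 4)) ∈ I)
    (hQ : ∀ p ∈ fingerCone, p ∈ normLift Q ↔ boxGauge (1 / 6) (p - (0, 0, 1 / 4)) ∈ I)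
    (hPQ : ∀ p ∉ fingerCone, p ∈ normLift P ↔ p ∈ normLift Q)
    (hQz : ∀ a b z, Q a b z → z ≤ 1 / 4) :
    fingerStretch '' normLift P = normLift Q := by
  have hmem (p) : fingerStretch p ∈ normLift Q ↔ p ∈ normLift P := by
    by_cases hp : p ∈ fingerCone
    · rw [hQ _ ((fingerStretch_mem_fingerCone_iff p).2 hp), hP p hp, boxGauge_fingerStretch]
    rw [hPQ p hp]
    by_cases hz : p.2.2 ≤ 1 / 4
    · rw [fingerStretch_eq_self hp hz]
    · exact iff_of_false (fun h => hz ((fingerStretch_snd_snd_le_iff p).1 (hQz _ _ _ h.2.2)))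
        fun h => hz (hQz _ _ _ h.2.2)
  ext p
  constructor
  · rintro ⟨p, hp, rfl⟩
    exact (hmem p).2 hp
  · exact fun hp => ⟨fingerShrink p, (hmem _).1 (by rwa [fingerStretch_fingerShrink]),
      fingerStretch_fingerShrink p⟩

/-- The thickened cross. -/
def crossProfile (a b z : ℝ) : Prop := z ∈ Icc (-1 / 4) (1 / 4) ∧ min a b ≤ 1 / 4

/-- The mirror image of `T1Profile`: the bottom of the thickened cross and the lower half of its
vertical sides. -/
def T2FlatProfile (a b z : ℝ) : Prop :=
  z = -1 / 4 ∧ min a b ≤ 1 / 4 ∨ z ∈ Icc (-1 / 4) 0 ∧ min a b = 1 / 4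

theorem boxGauge_of_mem_fingerCone {p : ℝ × ℝ × ℝ} (hp : p ∈ fingerCone) :
    boxGauge (1 / 2) (p - (0, 0, 1 / 4)) = 1 / 2 * (1 / 4 - p.2.2) ∧
      boxGauge (1 / 6) (p - (0, 0, 1 / 4)) = max (max |p.1| |p.2.1|) (1 / 6 * (1 / 4 - p.2.2)) := by
  have hp' : 2 * max |p.1| |p.2.1| < 1 / 4 - p.2.2 := hp
  have h : |p.2.2 - 1 / 4| = 1 / 4 - p.2.2 := by
    rw [abs_sub_comm, abs_of_nonneg]
    linarith [le_max_left |p.1| |p.2.1|, abs_nonneg p.1]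
  simp only [boxGauge, Prod.fst_sub, Prod.snd_sub, sub_zero, h, and_true]
  rw [max_eq_right]
  linarith

theorem image_fingerStretch_cross :
    fingerStretch '' normLift crossProfile = normLift VcutProfile := by
  refine image_fingerStretch_normLift (I := Iic (1 / 4)) (fun p hp => ?_) (fun p hp => ?_)
    (fun p hp => ?_) fun a b z h => h.1.2
  · rw [(boxGauge_of_mem_fingerCone hp).1]
    simp only [fingerCone, normLift, mem_ofPred_eq, crossProfile, mem_Icc, mem_Iic] at hp ⊢
    grind
  · rw [(boxGauge_of_mem_fingerCone hp).2]
    simp only [fingerCone, normLift, mem_ofPred_eq, VcutProfile, mem_Icc, mem_Iic] at hp ⊢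
    grind
  · simp only [fingerCone, normLift, mem_ofPred_eq, crossProfile, VcutProfile, mem_Icc] at hp ⊢
    grind

theorem image_fingerStretch_T2 : fingerStretch '' normLift T2FlatProfile = normLift T2Profile := by
  refine image_fingerStretch_normLift (I := {1 / 4}) (fun p hp => ?_) (fun p hp => ?_)
    (fun p hp => ?_) fun a b z h => by linarith [h.mem_Icc.2]
  · rw [(boxGauge_of_mem_fingerCone hp).1]
    simp only [fingerCone, normLift, mem_ofPred_eq, T2FlatProfile, mem_Icc,
      mem_singleton_iff] at hp ⊢
    grind
  · rw [(boxGauge_of_mem_fingerCone hp).2]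
    simp only [fingerCone, normLift, mem_ofPred_eq, T2Profile, mem_Icc, mem_singleton_iff] at hp ⊢
    grind
  · simp only [fingerCone, normLift, mem_ofPred_eq, T2FlatProfile, T2Profile, mem_Icc] at hp ⊢
    grind

theorem isCompact_normLift_cross : IsCompact (normLift crossProfile) := by
  have hcube : IsCompact (Icc (-1 : ℝ) 1 ×ˢ Icc (-1 : ℝ) 1 ×ˢ Icc (-1 : ℝ) 1) :=
    isCompact_Icc.prod (isCompact_Icc.prod isCompact_Icc)
  refine hcube.of_isClosed_subset ?_ fun p hp => ⟨abs_le.1 hp.1, abs_le.1 hp.2.1, ?_⟩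
  · simp only [normLift, crossProfile, mem_Icc]
    repeat' apply IsClosed.and
    all_goals exact isClosed_le (by fun_prop) (by fun_prop)
  · constructor <;> linarith [hp.2.2.1.1, hp.2.2.1.2]

theorem normLift_mono {P Q : ℝ → ℝ → ℝ → Prop} (h : ∀ a b z, P a b z → Q a b z) :
    normLift P ⊆ normLift Q := fun _ hp => ⟨hp.1, hp.2.1, h _ _ _ hp.2.2⟩

theorem isClosed_normLift_T2Flat : IsClosed (normLift T2FlatProfile) := by
  have hx : Continuous fun p : ℝ × ℝ × ℝ => |p.1| := by fun_prop
  have hy : Continuous fun p : ℝ × ℝ × ℝ => |p.2.1| := by fun_prop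
  have hz : Continuous fun p : ℝ × ℝ × ℝ => p.2.2 := by fun_prop
  have hmin := hx.min hy
  exact (isClosed_le hx continuous_const).inter <| (isClosed_le hy continuous_const).inter <|
    ((isClosed_eq hz continuous_const).inter (isClosed_le hmin continuous_const)).union <|
      (isClosed_Icc.preimage hz).inter (isClosed_eq hmin continuous_const)

theorem eq_of_qT_eq_of_mem_fingerCone {p q : ℝ × ℝ × ℝ} (hp : p ∈ normLift VcutProfile)
    (hcone : p ∈ fingerCone) (hq : q ∈ normLift VcutProfile) (h : qT p = qT q) : p = q := by
  have hpz := hp.2.2.1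
  have hqz := hq.2.2.1
  have hxy : |p.1| < 1 ∧ |p.2.1| < 1 := by
    simp only [fingerCone, normLift, VcutProfile, mem_ofPred_eq, mem_Icc] at hcone hp
    grind
  simp only [qT, Prod.mk.injEq] at h
  refine Prod.ext (eq_of_coe_eq_of_abs_lt_one hxy.1 hq.1 h.1)
    (Prod.ext (eq_of_coe_eq_of_abs_lt_one hxy.2 hq.2.1 h.2.1) (eq_of_addCircle_coe_eq ?_ h.2.2))
  rw [abs_lt]
  constructor <;> linarith [hpz.1, hpz.2, hqz.1, hqz.2]

theorem qT_eq_iff_qT_fingerStretch_eq {p q : ℝ × ℝ × ℝ} (hp : p ∈ normLift crossProfile)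
    (hq : q ∈ normLift crossProfile) :
    qT p = qT q ↔ qT (fingerStretch p) = qT (fingerStretch q) := by
  have hsub : normLift crossProfile ⊆ normLift VcutProfile := normLift_mono fun a b z h =>
    ⟨⟨by linarith [h.1.1], h.1.2⟩, Or.inl ⟨min_le_iff.1 h.2, h.1.1⟩⟩
  have hstretch : MapsTo fingerStretch (normLift crossProfile) (normLift VcutProfile) :=
    mapsTo_iff_image_subset.2 image_fingerStretch_cross.subset
  have of_cone {p q} (hp : p ∈ normLift crossProfile) (hq : q ∈ normLift crossProfile)
      (hcone : p ∈ fingerCone) : qT p = qT q ↔ qT (fingerStretch p) = qT (fingerStretch q) := by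
    refine ⟨fun h => ?_, fun h => ?_⟩
    · rw [eq_of_qT_eq_of_mem_fingerCone (hsub hp) hcone (hsub hq) h]
    · rw [(Function.LeftInverse.injective fingerShrink_fingerStretch)
        (eq_of_qT_eq_of_mem_fingerCone (hstretch hp) ((fingerStretch_mem_fingerCone_iff p).2 hcone)
          (hstretch hq) h)]
  by_cases hpc : p ∈ fingerCone
  · exact of_cone hp hq hpc
  by_cases hqc : q ∈ fingerCone
  · simpa only [eq_comm] using of_cone hq hp hqc
  · rw [fingerStretch_eq_self hpc hp.2.2.1.2, fingerStretch_eq_self hqc hq.2.2.1.2]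

theorem nonempty_homeomorph_image_fingerStretch {s : Set (ℝ × ℝ × ℝ)} (hs : IsCompact s)
    (hsub : s ⊆ normLift crossProfile) :
    Nonempty (qT '' (fingerStretch '' s) ≃ₜ qT '' s) := by
  rw [image_image]
  exact nonempty_homeomorph_image_of_fibres hs
    (continuous_qT.comp continuous_fingerStretch).continuousOn continuous_qT.continuousOn
    fun p hp q hq => (qT_eq_iff_qT_fingerStretch_eq (hsub hp) (hsub hq)).symm

theorem nonempty_homeomorph_Vcut_cross : Nonempty (Vcut ≃ₜ normRegion crossProfile) := by
  have h := nonempty_homeomorph_image_fingerStretch isCompact_normLift_cross subset_rfl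
  rwa [image_fingerStretch_cross, image_qT_normLift, image_qT_normLift, ← Vcut_eq_normRegion] at h

theorem nonempty_homeomorph_T2_T2Flat :
    Nonempty (normRegion T2Profile ≃ₜ normRegion T2FlatProfile) := by
  have hsub : normLift T2FlatProfile ⊆ normLift crossProfile := normLift_mono fun a b z h => by
    rcases h with ⟨rfl, h⟩ | ⟨h, h'⟩
    · exact ⟨by norm_num, h⟩
    · exact ⟨⟨h.1, by linarith [h.2]⟩, h'.le⟩
  have hcompact := isCompact_normLift_cross.of_isClosed_subset isClosed_normLift_T2Flat hsub
  have h := nonempty_homeomorph_image_fingerStretch hcompact hsub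
  rwa [image_fingerStretch_T2, image_qT_normLift, image_qT_normLift] at h

/-! ### Regions of revolution -/

theorem norm_qT2 {u : ℝ × ℝ} (hu : ‖u‖ ≤ 1) : ‖qT2 u‖ = ‖u‖ := by
  rw [Prod.norm_def, max_le_iff] at hu
  rw [qT2, Prod.norm_def, Prod.norm_def]
  exact congrArg₂ max (norm_coe_of_abs_le_one hu.1) (norm_coe_of_abs_le_one hu.2)

theorem eq_of_qT2_eq_of_norm_lt_one {u v : ℝ × ℝ} (hu : ‖u‖ < 1) (hv : ‖v‖ ≤ 1)
    (h : qT2 u = qT2 v) : u = v := by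
  rw [Prod.norm_def, max_lt_iff] at hu
  rw [Prod.norm_def, max_le_iff] at hv
  exact Prod.ext (eq_of_coe_eq_of_abs_lt_one hu.1 hv.1 (congrArg Prod.fst h))
    (eq_of_coe_eq_of_abs_lt_one hu.2 hv.2 (congrArg Prod.snd h))

theorem exists_qT2_eq (t : AddCircle (2 : ℝ) × AddCircle (2 : ℝ)) :
    ∃ u : ℝ × ℝ, ‖u‖ ≤ 1 ∧ qT2 u = t := by
  obtain ⟨x, hx, hx'⟩ := exists_abs_le_one_coe t.1
  obtain ⟨y, hy, hy'⟩ := exists_abs_le_one_coe t.2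
  exact ⟨(x, y), max_le hx hy, Prod.ext hx' hy'⟩

theorem norm_addCircle_prod_le_one (t : AddCircle (2 : ℝ) × AddCircle (2 : ℝ)) : ‖t‖ ≤ 1 := by
  obtain ⟨u, hu, rfl⟩ := exists_qT2_eq t
  exact (norm_qT2 hu).trans_le hu

theorem continuous_qT2 : Continuous qT2 := by
  have := AddCircle.continuous_mk' (2 : ℝ)
  unfold qT2
  fun_prop

theorem PuncTorusModel_eq : PuncTorusModel = {t | 1 / 4 ≤ ‖t‖} := by
  refine subset_antisymm ?_ fun t ht => ?_
  · rintro _ ⟨u, ⟨hx, hy, h⟩, rfl⟩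
    have hu : ‖u‖ ≤ 1 := max_le (abs_le.2 hx) (abs_le.2 hy)
    rw [mem_ofPred_eq, norm_qT2 hu]
    exact le_max_iff.2 h
  · obtain ⟨u, hu, rfl⟩ := exists_qT2_eq t
    rw [mem_ofPred_eq, norm_qT2 hu] at ht
    have hu' := max_le_iff.1 hu
    exact ⟨u, ⟨abs_le.1 hu'.1, abs_le.1 hu'.2, le_max_iff.1 ht⟩, rfl⟩

/-- The part of (torus) × ℝ swept out by the profile `A` in the half plane of pairs
`(distance from 0, height)`; distances are measured in the maximum norm. -/
def revolve (A : Set (ℝ × ℝ)) : Set ((AddCircle (2 : ℝ) × AddCircle (2 : ℝ)) × ℝ) :=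
  {p | (‖p.1‖, p.2) ∈ A}

/-- The part of `[-1, 1]² × ℝ` lying over `revolve A`. -/
def revolveLift (A : Set (ℝ × ℝ)) : Set ((ℝ × ℝ) × ℝ) := {p | ‖p.1‖ ≤ 1 ∧ (‖p.1‖, p.2) ∈ A}

theorem image_revolveLift (A : Set (ℝ × ℝ)) : Prod.map qT2 id '' revolveLift A = revolve A := by
  refine subset_antisymm ?_ fun ⟨t, z⟩ h => ?_
  · rintro _ ⟨⟨u, z⟩, ⟨hu, h⟩, rfl⟩
    rwa [revolve, mem_ofPred_eq, Prod.map_apply, norm_qT2 hu]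
  · obtain ⟨u, hu, rfl⟩ := exists_qT2_eq t
    rw [revolve, mem_ofPred_eq, norm_qT2 hu] at h
    exact ⟨(u, z), ⟨hu, h⟩, rfl⟩

theorem isCompact_setOf_norm_mem {F : Type*} [NormedAddCommGroup F] [ProperSpace F]
    {A : Set (ℝ × ℝ)} (hA : IsCompact A) : IsCompact {p : F × ℝ | (‖p.1‖, p.2) ∈ A} := by
  obtain ⟨R, hR⟩ := (hA.image continuous_fst).isBounded.subset_closedBall 0
  refine ((isCompact_closedBall (0 : F) R).prod (hA.image continuous_snd)).of_isClosed_subset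
    (hA.isClosed.preimage (by fun_prop)) fun p hp => ⟨?_, _, hp, rfl⟩
  have := hR ⟨_, hp, rfl⟩
  rwa [mem_closedBall_zero_iff, norm_norm, ← mem_closedBall_zero_iff] at this

theorem isCompact_revolveLift {A : Set (ℝ × ℝ)} (hA : IsCompact A) : IsCompact (revolveLift A) :=
  (isCompact_setOf_norm_mem hA).inter_left
    (isClosed_le continuous_fst.norm (continuous_const (y := 1)))

theorem isCompact_revolve {A : Set (ℝ × ℝ)} (hA : IsCompact A) : IsCompact (revolve A) := by
  rw [← image_revolveLift]
  exact (isCompact_revolveLift hA).image (continuous_qT2.prodMap continuous_id)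

section Reprofile

variable {A : Set (ℝ × ℝ)} {h : ℝ × ℝ → ℝ × ℝ}

/-- The map of solids of revolution induced by a map of their profiles. -/
def reprofile (h : ℝ × ℝ → ℝ × ℝ) (p : (ℝ × ℝ) × ℝ) : (ℝ × ℝ) × ℝ :=
  (radial norm (h (‖p.1‖, p.2)).1 p.1, (h (‖p.1‖, p.2)).2)

theorem norm_reprofile_fst (h0 : ∀ a ∈ A, a.1 ≠ 0) (hpos : ∀ a ∈ A, 0 < (h a).1)
    {p : (ℝ × ℝ) × ℝ} (hp : p ∈ revolveLift A) :
    ‖(reprofile h p).1‖ = (h (‖p.1‖, p.2)).1 :=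
  isGauge_norm.apply_radial (hpos _ hp.2).le (norm_ne_zero_iff.1 (h0 _ hp.2))

theorem continuousOn_reprofile (hh : ContinuousOn h A) (h0 : ∀ a ∈ A, a.1 ≠ 0) :
    ContinuousOn (reprofile h) (revolveLift A) := by
  have hc : ContinuousOn (fun p : (ℝ × ℝ) × ℝ => h (‖p.1‖, p.2)) (revolveLift A) :=
    hh.comp (by fun_prop) fun p hp => hp.2
  exact ((hc.fst.div (by fun_prop) fun p hp => h0 _ hp.2).smul continuousOn_fst).prodMk hc.snd

theorem image_reprofile (h0 : ∀ a ∈ A, 0 < a.1 ∧ a.1 ≤ 1)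
    (hpos : ∀ a ∈ A, 0 < (h a).1 ∧ (h a).1 ≤ 1) :
    reprofile h '' revolveLift A = revolveLift (h '' A) := by
  refine subset_antisymm ?_ ?_
  · rintro _ ⟨p, hp, rfl⟩
    rw [revolveLift, mem_ofPred_eq, norm_reprofile_fst (fun a ha => (h0 a ha).1.ne')
      (fun a ha => (hpos a ha).1) hp]
    exact ⟨(hpos _ hp.2).2, _, hp.2, rfl⟩
  · rintro ⟨v, w⟩ ⟨-, ⟨r, z⟩, hA, hrz⟩
    have hv : v ≠ 0 := norm_pos_iff.1 ((hpos _ hA).1.trans_eq (congrArg Prod.fst hrz))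
    have hr : ‖radial norm r v‖ = r := isGauge_norm.apply_radial (h0 _ hA).1.le hv
    refine ⟨(radial norm r v, z), ⟨hr.trans_le (h0 _ hA).2, by rwa [hr]⟩, ?_⟩
    rw [reprofile, hr, hrz, isGauge_norm.radial_radial isGauge_norm (h0 _ hA).1 hv,
      isGauge_norm.radial_self]

theorem qT2_smul_eq_iff {u v : ℝ × ℝ} {c : ℝ} (hc : 0 < c) (huv : ‖u‖ = ‖v‖) (hu : ‖u‖ ≤ 1)
    (hcu : c * ‖u‖ ≤ 1) (h1 : c * ‖u‖ = 1 ↔ ‖u‖ = 1) :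
    qT2 (c • u) = qT2 (c • v) ↔ qT2 u = qT2 v := by
  rcases hu.eq_or_lt with hu' | hu'
  · obtain rfl : c = 1 := by simpa [hu'] using h1
    simp only [one_smul]
  have hnorm (w : ℝ × ℝ) : ‖c • w‖ = c * ‖w‖ := by rw [norm_smul, Real.norm_of_nonneg hc.le]
  refine ⟨fun h => ?_, fun h => by rw [eq_of_qT2_eq_of_norm_lt_one hu' (huv ▸ hu) h]⟩
  have hlt : ‖c • u‖ < 1 := by
    rw [hnorm]
    exact hcu.lt_of_ne (mt h1.1 hu'.ne)
  rw [smul_right_injective _ hc.ne'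
    (eq_of_qT2_eq_of_norm_lt_one hlt (by rwa [hnorm, ← huv]) h)]

theorem qT2_reprofile_eq_iff (h0 : ∀ a ∈ A, 0 < a.1 ∧ a.1 ≤ 1) (hinj : InjOn h A)
    (hpos : ∀ a ∈ A, 0 < (h a).1 ∧ (h a).1 ≤ 1) (h1 : ∀ a ∈ A, (h a).1 = 1 ↔ a.1 = 1)
    {p q : (ℝ × ℝ) × ℝ} (hp : p ∈ revolveLift A) (hq : q ∈ revolveLift A) :
    Prod.map qT2 id p = Prod.map qT2 id q ↔
      Prod.map qT2 id (reprofile h p) = Prod.map qT2 id (reprofile h q) := by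
  have hnorm {p} (hp : p ∈ revolveLift A) : ‖qT2 (reprofile h p).1‖ = (h (‖p.1‖, p.2)).1 := by
    have := norm_reprofile_fst (fun a ha => (h0 a ha).1.ne') (fun a ha => (hpos a ha).1) hp
    rw [norm_qT2 (this.trans_le (hpos _ hp.2).2), this]
  have key (heq : (‖p.1‖, p.2) = (‖q.1‖, q.2)) :
      qT2 (reprofile h p).1 = qT2 (reprofile h q).1 ↔ qT2 p.1 = qT2 q.1 := by
    have hpq : ‖p.1‖ = ‖q.1‖ := (Prod.mk.inj heq).1
    have h0' : 0 < ‖p.1‖ := (h0 _ hp.2).1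
    simp only [reprofile, radial, ← hpq, ← (Prod.mk.inj heq).2]
    refine qT2_smul_eq_iff (div_pos (hpos _ hp.2).1 h0') hpq hp.1 ?_ ?_ <;>
      rw [div_mul_cancel₀ _ h0'.ne']
    exacts [(hpos _ hp.2).2, h1 _ hp.2]
  simp only [Prod.map, id, Prod.mk.injEq]
  constructor
  · rintro ⟨huv, hz⟩
    have hn : ‖p.1‖ = ‖q.1‖ := by rw [← norm_qT2 hp.1, huv, norm_qT2 hq.1]
    exact ⟨(key (Prod.ext hn hz)).2 huv, by simp only [reprofile, hn, hz]⟩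
  · rintro ⟨huv, hz⟩
    have hn := congrArg norm huv
    rw [hnorm hp, hnorm hq] at hn
    have heq := hinj hp.2 hq.2 (Prod.ext hn hz)
    exact ⟨(key heq).1 huv, (Prod.mk.inj heq).2⟩

theorem nonempty_homeomorph_revolve_image (hA : IsCompact A) (h0 : ∀ a ∈ A, 0 < a.1 ∧ a.1 ≤ 1)
    (hh : ContinuousOn h A) (hinj : InjOn h A) (hpos : ∀ a ∈ A, 0 < (h a).1 ∧ (h a).1 ≤ 1)
    (h1 : ∀ a ∈ A, (h a).1 = 1 ↔ a.1 = 1) : Nonempty (revolve A ≃ₜ revolve (h '' A)) := by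
  have hq : Continuous (Prod.map qT2 (id : ℝ → ℝ)) := continuous_qT2.prodMap continuous_id
  rw [← image_revolveLift, ← image_revolveLift, ← image_reprofile h0 hpos, image_image]
  exact nonempty_homeomorph_image_of_fibres (isCompact_revolveLift hA) hq.continuousOn
    (hq.comp_continuousOn (continuousOn_reprofile hh fun a ha => (h0 a ha).1.ne'))
    fun p hp q hq => qT2_reprofile_eq_iff h0 hinj hpos h1 hp hq

end Reprofile

theorem revolve_Icc_prod (J : Set ℝ) : revolve (Icc (1 / 4) 1 ×ˢ J) = PuncTorusModel ×ˢ J := by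
  ext ⟨t, z⟩
  simp [revolve, PuncTorusModel_eq, norm_addCircle_prod_le_one t]

/-- The corner of the square, as a point of the torus. -/
def corner : AddCircle (2 : ℝ) × AddCircle (2 : ℝ) := (((2 / 2 : ℝ)), ((2 / 2 : ℝ)))

theorem corner_add_corner : corner + corner = 0 := by
  simp only [corner, Prod.mk_add_mk, ← AddCircle.coe_add, add_halves, AddCircle.coe_period]
  rfl

theorem norm_add_corner (t : AddCircle (2 : ℝ) × AddCircle (2 : ℝ)) :
    ‖t + corner‖ = 1 - min ‖t.1‖ ‖t.2‖ := by
  rw [corner, Prod.norm_def, Prod.fst_add, Prod.snd_add, norm_add_half_period two_pos,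
    norm_add_half_period two_pos, max_sub_sub_left, div_self two_ne_zero]

/-- The embedding of (torus) × (-1, 1) into the 3-torus that moves the origin of the torus to the
corner of the square. -/
def cornerEmbedding (p : (AddCircle (2 : ℝ) × AddCircle (2 : ℝ)) × ℝ) : T3 :=
  ((p.1 + corner).1, (p.1 + corner).2, (p.2 : AddCircle (2 : ℝ)))

theorem continuous_cornerEmbedding : Continuous cornerEmbedding := by
  have := AddCircle.continuous_mk' (2 : ℝ)
  unfold cornerEmbedding
  fun_prop

theorem injOn_cornerEmbedding {A : Set (ℝ × ℝ)} (hz : ∀ a ∈ A, |a.2| < 1) :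
    InjOn cornerEmbedding (revolve A) := by
  intro p hp q hq h
  simp only [cornerEmbedding, Prod.fst_add, Prod.snd_add, Prod.mk.injEq, add_left_inj] at h
  exact Prod.ext (Prod.ext h.1 h.2.1) (eq_of_coe_eq_of_abs_lt_one (hz _ hp) (hz _ hq).le h.2.2)

theorem image_cornerEmbedding {P : ℝ → ℝ → ℝ → Prop} {A : Set (ℝ × ℝ)}
    (hP : ∀ a b z, 0 ≤ a → 0 ≤ b → (P a b z ↔ (1 - min a b, z) ∈ A)) :
    cornerEmbedding '' revolve A = normRegion P := by
  have hmem (t : AddCircle (2 : ℝ) × AddCircle (2 : ℝ)) (z : ℝ) :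
      P ‖t.1‖ ‖t.2‖ z ↔ (t + corner, z) ∈ revolve A := by
    rw [hP _ _ _ (norm_nonneg _) (norm_nonneg _), revolve, mem_ofPred_eq, norm_add_corner]
  have hcancel (t : AddCircle (2 : ℝ) × AddCircle (2 : ℝ)) : t + corner + corner = t := by
    rw [add_assoc, corner_add_corner, add_zero]
  refine subset_antisymm ?_ ?_
  · rintro _ ⟨⟨t, z⟩, h, rfl⟩
    exact ⟨z, (hmem (t + corner) z).2 (by rwa [hcancel]), rfl⟩
  · rintro ⟨x, y, _⟩ ⟨z, h, rfl⟩
    refine ⟨_, (hmem (x, y) z).1 h, ?_⟩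
    rw [cornerEmbedding, hcancel]

theorem nonempty_homeomorph_normRegion_revolve {P : ℝ → ℝ → ℝ → Prop} {A : Set (ℝ × ℝ)}
    (hA : IsCompact A) (hz : ∀ a ∈ A, |a.2| < 1)
    (hP : ∀ a b z, 0 ≤ a → 0 ≤ b → (P a b z ↔ (1 - min a b, z) ∈ A)) :
    Nonempty (normRegion P ≃ₜ revolve A) := by
  obtain ⟨e⟩ := nonempty_homeomorph_image_of_injOn (isCompact_revolve hA)
    continuous_cornerEmbedding.continuousOn (injOn_cornerEmbedding hz)
  rw [image_cornerEmbedding hP] at e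
  exact ⟨e.symm⟩

theorem nonempty_homeomorph_normRegion_of_reprofile {P : ℝ → ℝ → ℝ → Prop} {J : Set ℝ}
    {h : ℝ × ℝ → ℝ × ℝ} (hJ : IsCompact J) (hh : Continuous h)
    (hinj : InjOn h (Icc (1 / 4) 1 ×ˢ J))
    (hpos : ∀ a ∈ Icc (1 / 4) 1 ×ˢ J, 0 < (h a).1 ∧ (h a).1 ≤ 1 ∧ ((h a).1 = 1 ↔ a.1 = 1))
    (hz : ∀ a ∈ Icc (1 / 4) 1 ×ˢ J, |(h a).2| < 1)
    (hP : ∀ a b z, 0 ≤ a → 0 ≤ b → (P a b z ↔ (1 - min a b, z) ∈ h '' (Icc (1 / 4) 1 ×ˢ J))) :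
    Nonempty (normRegion P ≃ₜ PuncTorusModel × J) := by
  have hA : IsCompact (Icc (1 / 4 : ℝ) 1 ×ˢ J) := isCompact_Icc.prod hJ
  obtain ⟨e⟩ := nonempty_homeomorph_normRegion_revolve (hA.image hh) (forall_mem_image.2 hz) hP
  obtain ⟨e'⟩ := nonempty_homeomorph_revolve_image hA
    (fun a ha => ⟨by linarith [ha.1.1], ha.1.2⟩) hh.continuousOn hinj
    (fun a ha => ⟨(hpos a ha).1, (hpos a ha).2.1⟩) fun a ha => (hpos a ha).2.2
  rw [revolve_Icc_prod] at e'
  exact ⟨(e.trans e'.symm).trans (Homeomorph.Set.prod _ _)⟩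

theorem nonempty_homeomorph_cross_prod :
    Nonempty (normRegion crossProfile ≃ₜ PuncTorusModel × Icc (0 : ℝ) 1) := by
  refine nonempty_homeomorph_normRegion_of_reprofile
    (h := fun a => (2 / 3 + a.1 / 3, a.2 / 2 - 1 / 4)) isCompact_Icc
    (by fun_prop) (fun a _ b _ hab => ?_) (fun a ha => ?_) (fun a ha => ?_)
    fun a b z ha hb => ?_
  · simp only [Prod.mk.injEq] at hab
    exact Prod.ext (by linarith) (by linarith)
  · exact ⟨by linarith [ha.1.1], by linarith [ha.1.2], by constructor <;> intro h <;> linarith⟩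
  · exact abs_lt.2 ⟨by linarith [ha.2.1], by linarith [ha.2.2]⟩
  · have := le_min ha hb
    constructor
    · rintro ⟨hz, hab⟩
      exact ⟨(1 - 3 * min a b, 2 * z + 1 / 2), ⟨⟨by linarith, by linarith⟩, by linarith [hz.1],
        by linarith [hz.2]⟩, Prod.ext (by dsimp only; ring) (by dsimp only; ring)⟩
    · rintro ⟨⟨r, s⟩, ⟨hr, hs⟩, h⟩
      simp only [Prod.mk.injEq] at h
      exact ⟨⟨by linarith [hs.1], by linarith [hs.2]⟩, by linarith [hr.1]⟩

/-- The collar `1/4 ≤ r ≤ 1/2` of the puncture goes to the vertical annulus above `∂E`, the rest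
of the torus to the horizontal part of `T₁`. -/
def T1Reprofile (a : ℝ × ℝ) : ℝ × ℝ := (max (3 / 4) ((1 + a.1) / 2), min (a.1 - 1 / 4) (1 / 4))

theorem isOncePuncturedTorus_T1 : IsOncePuncturedTorus (normRegion T1Profile) := by
  suffices Nonempty (normRegion T1Profile ≃ₜ PuncTorusModel × ({0} : Set ℝ)) by
    obtain ⟨e⟩ := this
    exact ⟨e.trans (Homeomorph.prodUnique _ _)⟩
  refine nonempty_homeomorph_normRegion_of_reprofile (h := T1Reprofile) isCompact_singleton
    (by unfold T1Reprofile; fun_prop) ?_ ?_ ?_ fun a b z ha hb => ?_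
  · rintro ⟨r, s⟩ ⟨-, rfl⟩ ⟨r', s'⟩ ⟨-, rfl⟩ h
    simp only [T1Reprofile, Prod.mk.injEq] at h
    exact Prod.ext (by grind) rfl
  · rintro ⟨r, s⟩ ⟨hr, -⟩
    simp only [T1Reprofile, mem_Icc] at hr ⊢
    grind
  · rintro ⟨r, s⟩ ⟨hr, -⟩
    simp only [T1Reprofile, mem_Icc, abs_lt] at hr ⊢
    grind
  · have := le_min ha hb
    constructor
    · rintro (⟨rfl, hab⟩ | ⟨hz, hab⟩)
      · refine ⟨(1 - 2 * min a b, 0), ⟨⟨by linarith, by linarith⟩, rfl⟩, Prod.ext ?_ ?_⟩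
        · exact (max_eq_right (by dsimp only; linarith)).trans (by dsimp only; ring)
        · exact min_eq_right (by dsimp only; linarith)
      · refine ⟨(z + 1 / 4, 0), ⟨⟨by linarith [hz.1], by linarith [hz.2]⟩, rfl⟩, Prod.ext ?_ ?_⟩
        · exact (max_eq_left (by dsimp only; linarith [hz.2])).trans (by rw [hab]; norm_num)
        · exact (min_eq_left (by dsimp only; linarith [hz.2])).trans (by dsimp only; ring)
    · rintro ⟨⟨r, s⟩, ⟨hr, -⟩, h⟩
      simp only [T1Reprofile, T1Profile, mem_Icc, Prod.mk.injEq] at hr h ⊢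
      grind

theorem nonempty_homeomorph_normRegion_neg (P : ℝ → ℝ → ℝ → Prop) :
    Nonempty (normRegion (fun a b z => P a b (-z)) ≃ₜ normRegion P) := by
  let e : T3 ≃ₜ T3 :=
    (Homeomorph.refl _).prodCongr ((Homeomorph.refl _).prodCongr (Homeomorph.neg _))
  refine ⟨(e.image _).trans (Homeomorph.setCongr ?_)⟩
  refine subset_antisymm ?_ ?_
  · rintro _ ⟨⟨x, y, _⟩, ⟨z, h, rfl⟩, rfl⟩
    exact ⟨-z, h, AddCircle.coe_neg (2 : ℝ)⟩
  · rintro ⟨x, y, _⟩ ⟨z, h, rfl⟩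
    exact ⟨(x, y, ((-z : ℝ) : AddCircle (2 : ℝ))), ⟨-z, by simpa using h, rfl⟩, by simp [e]⟩

theorem isOncePuncturedTorus_T2 : IsOncePuncturedTorus (normRegion T2Profile) := by
  have hneg : T2FlatProfile = fun a b z => T1Profile a b (-z) := by
    ext a b z
    simp only [T2FlatProfile, T1Profile, mem_Icc]
    grind
  obtain ⟨e⟩ := nonempty_homeomorph_T2_T2Flat
  obtain ⟨e'⟩ := nonempty_homeomorph_normRegion_neg T1Profile
  obtain ⟨e''⟩ := isOncePuncturedTorus_T1
  rw [← hneg] at e'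
  exact ⟨(e.trans e').trans e''⟩

theorem nonempty_homeomorph_Vcut_prod :
    Nonempty (Vcut ≃ₜ normRegion T1Profile × Icc (0 : ℝ) 1) := by
  obtain ⟨e⟩ := nonempty_homeomorph_Vcut_cross
  obtain ⟨e'⟩ := nonempty_homeomorph_cross_prod
  obtain ⟨e''⟩ := isOncePuncturedTorus_T1
  exact ⟨(e.trans e').trans (e''.symm.prodCongr (Homeomorph.refl _))⟩

/-! ### The thickened cross as a band with a handle -/

/-- The gauge whose unit ball is the square `[-1, 1]²`, on the plane of complex numbers. -/
def squareGauge (w : ℂ) : ℝ := max |w.re| |w.im|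

theorem isGauge_squareGauge : IsGauge squareGauge where
  continuous := (Complex.continuous_re.abs).max Complex.continuous_im.abs
  smul ht w := by
    simp only [squareGauge, Complex.smul_re, Complex.smul_im, smul_eq_mul, abs_mul,
      abs_of_nonneg ht, mul_max_of_nonneg _ _ ht]
  pos {w} hw := by
    by_contra! h
    simp only [squareGauge, max_le_iff, abs_nonpos_iff] at h
    exact hw (Complex.ext h.1 h.2)

/-- Multiplication by `c`, corrected radially so that it preserves `squareGauge`. It turns the
cross-section of a square bar. -/
def squareRotation (c w : ℂ) : ℂ := radial squareGauge (squareGauge w) (c * w)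

section Rotation

variable {c d w : ℂ}

theorem squareGauge_squareRotation (hc : c ≠ 0) :
    squareGauge (squareRotation c w) = squareGauge w := by
  rcases eq_or_ne w 0 with rfl | hw
  · simp [squareRotation, radial]
  · exact isGauge_squareGauge.apply_radial (isGauge_squareGauge.nonneg w) (mul_ne_zero hc hw)

theorem squareRotation_squareRotation (hc : c ≠ 0) :
    squareRotation d (squareRotation c w) = squareRotation (d * c) w := by
  rcases eq_or_ne w 0 with rfl | hw
  · simp [squareRotation, radial]
  have hcw : 0 < squareGauge (c * w) := isGauge_squareGauge.pos (mul_ne_zero hc hw)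
  rw [squareRotation, squareGauge_squareRotation hc, squareRotation, radial.eq_1 _ _ (c * w),
    mul_smul_comm,
    isGauge_squareGauge.radial_smul (div_pos (isGauge_squareGauge.pos hw) hcw), squareRotation,
    mul_assoc]

theorem squareRotation_ofReal_of_pos {r : ℝ} (hr : 0 < r) : squareRotation r w = w := by
  rw [squareRotation, ← Complex.real_smul, isGauge_squareGauge.radial_smul hr,
    isGauge_squareGauge.radial_self]

theorem squareRotation_neg : squareRotation (-c) w = -squareRotation c w := by
  have h (v : ℂ) : squareGauge (-v) = squareGauge v := by simp [squareGauge]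
  rw [squareRotation, radial, neg_mul, h, smul_neg, squareRotation, radial]

theorem squareRotation_inv_squareRotation (hc : c ≠ 0) :
    squareRotation c⁻¹ (squareRotation c w) = w := by
  rw [squareRotation_squareRotation hc, inv_mul_cancel₀ hc]
  exact_mod_cast squareRotation_ofReal_of_pos one_pos

theorem squareRotation_injective (hc : c ≠ 0) : Function.Injective (squareRotation c) :=
  Function.LeftInverse.injective fun _ => squareRotation_inv_squareRotation hc

theorem exists_squareRotation_eq (hc : c ≠ 0) (v : ℂ) :
    ∃ w, squareGauge w = squareGauge v ∧ squareRotation c w = v :=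
  ⟨squareRotation c⁻¹ v, squareGauge_squareRotation (inv_ne_zero hc), by
    simpa using squareRotation_inv_squareRotation (inv_ne_zero hc) (w := v)⟩

theorem continuous_squareRotation {X : Type*} [TopologicalSpace X] {f g : X → ℂ}
    (hf : Continuous f) (hg : Continuous g) (h0 : ∀ x, f x ≠ 0) :
    Continuous fun x => squareRotation (f x) (g x) :=
  isGauge_squareGauge.continuous_radial (isGauge_squareGauge.continuous.comp hg) (hf.mul hg)
    fun x hx => mul_ne_zero (h0 x) fun h => hx (h ▸ isGauge_squareGauge.zero)

/-- The rotation of the cross-section of the band at the angle `u`. It is chosen so as to be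
trivial for `1/4 ≤ u ≤ 3/4`, a half turn for `-3/4 ≤ u ≤ -1/4`, and equal at both ends `±1`. -/
def bandTwist (u : ℝ) : ℂ := ⟨u * (1 - u ^ 2), max 0 (|(|u| - 1 / 2)| - 1 / 4)⟩

/-- The rotation of the cross-section of the handle at the height `t`: a half turn from one end
of the handle to the other. -/
def handleTwist (t : ℝ) : ℂ := ⟨1 - 2 * t, t * (1 - t)⟩

theorem continuous_bandTwist : Continuous bandTwist := by
  refine Complex.equivRealProdCLM.symm.continuous.comp
    (f := fun u : ℝ => (u * (1 - u ^ 2), max 0 (|(|u| - 1 / 2)| - 1 / 4))) ?_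
  fun_prop

theorem continuous_handleTwist : Continuous handleTwist := by
  refine Complex.equivRealProdCLM.symm.continuous.comp
    (f := fun t : ℝ => (1 - 2 * t, t * (1 - t))) ?_
  fun_prop

theorem bandTwist_ne_zero (u : ℝ) : bandTwist u ≠ 0 := by
  intro h
  obtain ⟨h₁, h₂⟩ := Complex.ext_iff.1 h
  have h₃ : |(|u| - 1 / 2)| ≤ 1 / 4 := by
    simp only [bandTwist, Complex.zero_im, max_eq_left_iff] at h₂
    linarith
  have h₄ := abs_le.1 h₃
  rcases mul_eq_zero.1 h₁ with h₅ | h₅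
  · rw [h₅, abs_zero] at h₄
    linarith
  · nlinarith [sq_abs u]

theorem handleTwist_ne_zero (t : ℝ) : handleTwist t ≠ 0 := by
  intro h
  obtain ⟨h₁, h₂⟩ := Complex.ext_iff.1 h
  have ht : t = 1 / 2 := by
    simp only [handleTwist, Complex.zero_re] at h₁
    linarith
  norm_num [handleTwist, ht] at h₂

theorem bandTwist_eq_ofReal {u : ℝ} (h : |(|u| - 1 / 2)| ≤ 1 / 4) :
    bandTwist u = (u * (1 - u ^ 2) : ℝ) := by
  rw [bandTwist, max_eq_left (by linarith)]
  rfl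

theorem squareRotation_bandTwist_of_pos {u : ℝ} (hu : u ∈ Icc (1 / 4) (3 / 4)) :
    squareRotation (bandTwist u) w = w := by
  obtain ⟨h₁, h₂⟩ := hu
  rw [bandTwist_eq_ofReal (by grind)]
  exact squareRotation_ofReal_of_pos (mul_pos (by linarith) (by nlinarith))

theorem squareRotation_bandTwist_of_neg {u : ℝ} (hu : -u ∈ Icc (1 / 4) (3 / 4)) :
    squareRotation (bandTwist u) w = -w := by
  have h : bandTwist u = -bandTwist (-u) := by
    have hu' : |(|u| - 1 / 2)| ≤ 1 / 4 := by grind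
    rw [bandTwist_eq_ofReal hu', bandTwist_eq_ofReal (by rwa [abs_neg])]
    push_cast
    ring
  rw [h, squareRotation_neg, squareRotation_bandTwist_of_pos hu]

theorem squareRotation_handleTwist_zero : squareRotation (handleTwist 0) w = w := by
  have h : handleTwist 0 = (1 : ℝ) := by simp [handleTwist, Complex.ext_iff]
  rw [h, squareRotation_ofReal_of_pos one_pos]

theorem squareRotation_handleTwist_one : squareRotation (handleTwist 1) w = -w := by
  have h : handleTwist 1 = -(1 : ℝ) := by norm_num [handleTwist, Complex.ext_iff]
  rw [h, squareRotation_neg, squareRotation_ofReal_of_pos one_pos]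

/-- The square cross-section of the band and of the handle. -/
def crossSection : Set ℂ := {w | squareGauge w ≤ 1 / 4}

theorem mem_crossSection : w ∈ crossSection ↔ |w.re| ≤ 1 / 4 ∧ |w.im| ≤ 1 / 4 := by
  simp only [crossSection, squareGauge, mem_ofPred_eq, max_le_iff]

theorem isCompact_crossSection : IsCompact crossSection := by
  have h : crossSection = Icc (-1 / 4) (1 / 4) ×ℂ Icc (-1 / 4) (1 / 4) := by
    ext w
    simp only [mem_crossSection, Complex.mem_reProdIm, abs_le, mem_Icc, neg_div]
  exact h ▸ isCompact_Icc.reProdIm isCompact_Icc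

theorem squareRotation_mem_crossSection (hc : c ≠ 0) :
    squareRotation c w ∈ crossSection ↔ w ∈ crossSection := by
  simp only [crossSection, mem_ofPred_eq, squareGauge_squareRotation hc]

theorem exists_mem_crossSection_squareRotation_eq (hc : c ≠ 0) {v : ℂ} (hv : v ∈ crossSection) :
    ∃ w ∈ crossSection, squareRotation c w = v := by
  obtain ⟨w, -, rfl⟩ := exists_squareRotation_eq hc v
  exact ⟨w, (squareRotation_mem_crossSection hc).1 hv, rfl⟩

/-- A parametrization of the solid band `|y| ≤ 1/4` of the thickened cross. The shear
`u = x + 2 y` moves the two attaching regions of the handle, at `y = 1/4` and `y = -1/4`, to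
disjoint ranges of `u`, and the rotation brings both of them to the side `w.re = 1/4`. -/
def crossBand (a : ℝ × ℂ) : T3 :=
  let w := squareRotation (bandTwist a.1) a.2
  qT (a.1 - 2 * w.re, w.re, w.im)

/-- A parametrization of the solid handle `|x| ≤ 1/4`, `1/4 ≤ y ≤ 7/4` of the thickened cross. -/
def crossHandle (a : ℝ × ℂ) : T3 :=
  let w := squareRotation (handleTwist a.1) a.2
  qT (w.re, 1 / 4 + 3 / 2 * a.1, w.im)

theorem continuous_crossBand : Continuous crossBand := by
  have h : Continuous fun a : ℝ × ℂ => squareRotation (bandTwist a.1) a.2 :=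
    continuous_squareRotation (continuous_bandTwist.comp continuous_fst) continuous_snd
      fun _ => bandTwist_ne_zero _
  exact continuous_qT.comp (by fun_prop)

theorem continuous_crossHandle : Continuous crossHandle := by
  have h : Continuous fun a : ℝ × ℂ => squareRotation (handleTwist a.1) a.2 :=
    continuous_squareRotation (continuous_handleTwist.comp continuous_fst) continuous_snd
      fun _ => handleTwist_ne_zero _
  exact continuous_qT.comp (by fun_prop)

theorem bandTwist_eq_of_abs_eq_one {u v : ℝ} (hu : |u| = 1) (hv : |v| = 1) :
    bandTwist u = bandTwist v := by
  have h (x : ℝ) (hx : |x| = 1) : bandTwist x = ⟨0, 1 / 4⟩ := by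
    have hx' : x ^ 2 = 1 := by rw [← sq_abs, hx, one_pow]
    simp only [bandTwist, hx', hx]
    norm_num
  rw [h u hu, h v hv]

theorem abs_squareRotation_bandTwist_le {u : ℝ} (hw : w ∈ crossSection) :
    |(squareRotation (bandTwist u) w).re| ≤ 1 / 4 ∧ |(squareRotation (bandTwist u) w).im| ≤ 1 / 4 :=
  mem_crossSection.1 ((squareRotation_mem_crossSection (bandTwist_ne_zero u)).2 hw)

theorem abs_squareRotation_handleTwist_le {t : ℝ} (hw : w ∈ crossSection) :
    |(squareRotation (handleTwist t) w).re| ≤ 1 / 4 ∧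
      |(squareRotation (handleTwist t) w).im| ≤ 1 / 4 :=
  mem_crossSection.1 ((squareRotation_mem_crossSection (handleTwist_ne_zero t)).2 hw)

theorem crossBand_eq_crossBand_iff {u v : ℝ} {w w' : ℂ} (hu : u ∈ Icc (-1) 1)
    (hv : v ∈ Icc (-1) 1) (hw : w ∈ crossSection) (hw' : w' ∈ crossSection) :
    crossBand (u, w) = crossBand (v, w') ↔ w = w' ∧ (u = v ∨ |u| = 1 ∧ |v| = 1) := by
  obtain ⟨hre, him⟩ := abs_squareRotation_bandTwist_le (u := u) hw
  obtain ⟨hre', him'⟩ := abs_squareRotation_bandTwist_le (u := v) hw'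
  have hcoe : (u : AddCircle (2 : ℝ)) = v ↔ u = v ∨ |u| = 1 ∧ |v| = 1 := by
    simpa using addCircle_coe_eq_coe_iff_of_abs_le (p := 2) (x := u) (y := v)
      (by simpa using abs_le.2 hu) (by simpa using abs_le.2 hv)
  have htwist (h : u = v ∨ |u| = 1 ∧ |v| = 1) : bandTwist u = bandTwist v :=
    h.elim (congrArg _) fun h => bandTwist_eq_of_abs_eq_one h.1 h.2
  simp only [crossBand, qT, Prod.mk.injEq]
  constructor
  · rintro ⟨h₁, h₂, h₃⟩
    have e₂ := eq_of_coe_eq_of_abs_lt_one (by linarith) (by linarith) h₂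
    have e₃ := eq_of_coe_eq_of_abs_lt_one (by linarith) (by linarith) h₃
    have huv : u = v ∨ |u| = 1 ∧ |v| = 1 := by
      rwa [e₂, AddCircle.coe_sub, AddCircle.coe_sub, sub_left_inj, hcoe] at h₁
    have e := Complex.ext e₂ e₃
    rw [htwist huv] at e
    exact ⟨squareRotation_injective (bandTwist_ne_zero v) e, huv⟩
  · rintro ⟨rfl, huv⟩
    simp only [htwist huv, AddCircle.coe_sub, hcoe.2 huv, and_self]

theorem crossHandle_eq_crossHandle_iff {s t : ℝ} {w w' : ℂ} (hs : s ∈ Icc 0 1)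
    (ht : t ∈ Icc 0 1) (hw : w ∈ crossSection) (hw' : w' ∈ crossSection) :
    crossHandle (s, w) = crossHandle (t, w') ↔ w = w' ∧ s = t := by
  obtain ⟨hre, him⟩ := abs_squareRotation_handleTwist_le (t := s) hw
  obtain ⟨hre', him'⟩ := abs_squareRotation_handleTwist_le (t := t) hw'
  constructor
  · simp only [crossHandle, qT, Prod.mk.injEq]
    rintro ⟨h₁, h₂, h₃⟩
    have e₁ := eq_of_coe_eq_of_abs_lt_one (by linarith) (by linarith) h₁
    have e₂ := eq_of_addCircle_coe_eq
      (abs_lt.2 ⟨by linarith [hs.1, ht.2], by linarith [hs.2, ht.1]⟩) h₂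
    have e₃ := eq_of_coe_eq_of_abs_lt_one (by linarith) (by linarith) h₃
    obtain rfl : s = t := by linarith
    exact ⟨squareRotation_injective (handleTwist_ne_zero s) (Complex.ext e₁ e₃), rfl⟩
  · rintro ⟨rfl, rfl⟩
    rfl

theorem crossBand_eq_crossHandle_iff {u t : ℝ} {w w' : ℂ} (hu : u ∈ Icc (-1) 1)
    (ht : t ∈ Icc 0 1) (hw : w ∈ crossSection) (hw' : w' ∈ crossSection) :
    crossBand (u, w) = crossHandle (t, w') ↔ w.re = 1 / 4 ∧ w.im = w'.im ∧
      (t = 0 ∧ u = 1 / 2 + w'.re ∨ t = 1 ∧ u = -(1 / 2) - w'.re) := by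
  obtain ⟨hre, him⟩ := abs_squareRotation_bandTwist_le (u := u) hw
  obtain ⟨hre', him'⟩ := abs_squareRotation_handleTwist_le (t := t) hw'
  have hw₁ := abs_le.1 (mem_crossSection.1 hw').1
  rw [abs_le] at hre hre'
  simp only [mem_Icc] at hu ht
  simp only [crossBand, crossHandle, qT, Prod.mk.injEq]
  constructor
  · rintro ⟨h₁, h₂, h₃⟩
    have e₃ := eq_of_coe_eq_of_abs_lt_one (by linarith) (by linarith) h₃
    rcases ht.2.lt_or_eq with ht' | rfl
    · have e₂ := eq_of_addCircle_coe_eq (abs_lt.2 ⟨by linarith, by linarith⟩) h₂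
      obtain rfl : t = 0 := by linarith
      rw [squareRotation_handleTwist_zero] at *
      have e₁ := eq_of_addCircle_coe_eq (abs_lt.2 ⟨by linarith, by linarith⟩) h₁
      have hu' : u ∈ Icc (1 / 4) (3 / 4) := ⟨by linarith, by linarith⟩
      rw [squareRotation_bandTwist_of_pos hu'] at *
      exact ⟨by linarith, e₃, .inl ⟨rfl, by linarith⟩⟩
    · rw [squareRotation_handleTwist_one] at *
      rw [show (1 / 4 + 3 / 2 * 1 : ℝ) = -1 / 4 + 2 by norm_num, AddCircle.coe_add_period] at h₂
      have e₂ := eq_of_addCircle_coe_eq (abs_lt.2 ⟨by linarith, by linarith⟩) h₂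
      simp only [Complex.neg_re, Complex.neg_im] at *
      have e₁ := eq_of_addCircle_coe_eq (abs_lt.2 ⟨by linarith, by linarith⟩) h₁
      have hu' : -u ∈ Icc (1 / 4) (3 / 4) := ⟨by linarith, by linarith⟩
      rw [squareRotation_bandTwist_of_neg hu'] at *
      simp only [Complex.neg_re, Complex.neg_im] at *
      exact ⟨by linarith, by linarith, .inr ⟨trivial, by linarith⟩⟩
  · rintro ⟨h₁, h₂, ⟨rfl, rfl⟩ | ⟨rfl, rfl⟩⟩
    · rw [squareRotation_handleTwist_zero,
        squareRotation_bandTwist_of_pos ⟨by linarith, by linarith⟩, h₁, h₂]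
      refine ⟨?_, ?_, rfl⟩ <;> congr 1 <;> ring
    · rw [squareRotation_handleTwist_one,
        squareRotation_bandTwist_of_neg ⟨by linarith, by linarith⟩,
        show (1 / 4 + 3 / 2 * 1 : ℝ) = -(1 / 4) + 2 by norm_num, AddCircle.coe_add_period]
      simp only [Complex.neg_re, Complex.neg_im, h₁, h₂, and_true]
      congr 1
      ring

theorem crossBand_mem {u : ℝ} (hw : w ∈ crossSection) :
    crossBand (u, w) ∈ normRegion crossProfile := by
  obtain ⟨hre, him⟩ := abs_squareRotation_bandTwist_le (u := u) hw
  refine ⟨_, ⟨by rwa [neg_div, mem_Icc, ← abs_le], ?_⟩, rfl⟩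
  exact min_le_of_right_le ((norm_coe_addCircle_le_abs _).trans hre)

theorem crossHandle_mem {t : ℝ} (hw : w ∈ crossSection) :
    crossHandle (t, w) ∈ normRegion crossProfile := by
  obtain ⟨hre, him⟩ := abs_squareRotation_handleTwist_le (t := t) hw
  refine ⟨_, ⟨by rwa [neg_div, mem_Icc, ← abs_le], ?_⟩, rfl⟩
  exact min_le_of_left_le ((norm_coe_addCircle_le_abs _).trans hre)

theorem exists_crossBand_eq (x : AddCircle (2 : ℝ)) {y z : ℝ} (hy : |y| ≤ 1 / 4)
    (hz : |z| ≤ 1 / 4) : ∃ u ∈ Icc (-1) 1, ∃ w ∈ crossSection, crossBand (u, w) = (x, ↑y, ↑z) := by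
  obtain ⟨u, hu, hux⟩ := exists_abs_le_one_coe (x + ((2 * y : ℝ) : AddCircle (2 : ℝ)))
  obtain ⟨w, hw, hyz⟩ := exists_mem_crossSection_squareRotation_eq (bandTwist_ne_zero u)
    (v := ⟨y, z⟩) (mem_crossSection.2 ⟨hy, hz⟩)
  refine ⟨u, abs_le.1 hu, w, hw, ?_⟩
  simp only [crossBand, hyz, qT, AddCircle.coe_sub, hux, add_sub_cancel_right]

theorem exists_crossHandle_eq {x z : ℝ} {y : AddCircle (2 : ℝ)} (hx : |x| ≤ 1 / 4)
    (hy : 1 / 4 ≤ ‖y‖) (hz : |z| ≤ 1 / 4) :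
    ∃ t ∈ Icc 0 1, ∃ w ∈ crossSection, crossHandle (t, w) = (↑x, y, ↑z) := by
  obtain ⟨s, ⟨hs₁, hs₂⟩, rfl⟩ := exists_coe_addCircle two_pos (1 / 4) y
  have hs : s ≤ 7 / 4 := by
    by_contra! h
    have hle := norm_coe_addCircle_le_abs (p := 2) (s - 2)
    rw [AddCircle.coe_sub, AddCircle.coe_period, sub_zero] at hle
    linarith [abs_lt.2 (⟨by linarith, by linarith⟩ : -(1 / 4) < s - 2 ∧ s - 2 < 1 / 4)]
  obtain ⟨w, hw, hxz⟩ := exists_mem_crossSection_squareRotation_eq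
    (handleTwist_ne_zero (2 / 3 * (s - 1 / 4))) (v := ⟨x, z⟩) (mem_crossSection.2 ⟨hx, hz⟩)
  refine ⟨2 / 3 * (s - 1 / 4), ⟨by linarith, by linarith⟩, w, hw, ?_⟩
  simp only [crossHandle, hxz, qT, Prod.mk.injEq, true_and, and_true]
  congr 1
  ring

theorem image_crossBand_union_image_crossHandle :
    crossBand '' (Icc (-1) 1 ×ˢ crossSection) ∪ crossHandle '' (Icc 0 1 ×ˢ crossSection) =
      normRegion crossProfile := by
  refine subset_antisymm ?_ ?_
  · rintro _ (⟨a, ha, rfl⟩ | ⟨a, ha, rfl⟩)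
    exacts [crossBand_mem ha.2, crossHandle_mem ha.2]
  · rintro ⟨x, y, _⟩ ⟨z, ⟨hz, hxy⟩, rfl⟩
    rw [neg_div, mem_Icc, ← abs_le] at hz
    rcases le_or_gt ‖y‖ (1 / 4) with hy | hy
    · obtain ⟨y, hy₁, rfl⟩ := exists_abs_le_one_coe y
      rw [norm_coe_of_abs_le_one hy₁] at hy
      obtain ⟨u, hu, w, hw, h⟩ := exists_crossBand_eq x hy hz
      exact .inl ⟨(u, w), ⟨hu, hw⟩, h⟩
    · have hx : ‖x‖ ≤ 1 / 4 := (min_le_iff.1 hxy).resolve_right hy.not_ge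
      obtain ⟨x, hx₁, rfl⟩ := exists_abs_le_one_coe x
      rw [norm_coe_of_abs_le_one hx₁] at hx
      obtain ⟨t, ht, w, hw, h⟩ := exists_crossHandle_eq hx hy.le hz
      exact .inr ⟨(t, w), ⟨ht, hw⟩, h⟩

/-! ### The thickened cross as a thickened planar surface -/

/-- A piecewise linear parametrization of the boundary of the square `[-1, 1]²` by `[-1, 1]`,
closing up at `±1`, for which `[-3/4, 3/4]` runs over the right-hand side. -/
def squareLoop (u : ℝ) : ℝ × ℝ :=
  (max (-1) (min 1 (13 - 16 * |u|)),
    min (8 * (1 - u)) (max (-8 * (1 + u)) (max (-1) (min 1 (4 / 3 * u)))))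

theorem continuous_squareLoop : Continuous squareLoop := by
  unfold squareLoop
  fun_prop

theorem norm_prod_eq_one_iff {x y : ℝ} :
    ‖(x, y)‖ = 1 ↔ |x| ≤ 1 ∧ |y| ≤ 1 ∧ (|x| = 1 ∨ |y| = 1) := by
  rw [Prod.norm_def, Real.norm_eq_abs, Real.norm_eq_abs]
  grind

theorem squareLoop_of_abs_le {u : ℝ} (h : |u| ≤ 3 / 4) : squareLoop u = (1, 4 / 3 * u) := by
  simp only [squareLoop, Prod.mk.injEq]
  grind

theorem squareLoop_of_mem_Icc {u : ℝ} (h : u ∈ Icc (3 / 4) (7 / 8)) :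
    squareLoop u = (13 - 16 * u, 1) := by
  simp only [squareLoop, Prod.mk.injEq]
  grind

theorem squareLoop_of_ge {u : ℝ} (h : 7 / 8 ≤ u) : squareLoop u = (-1, 8 * (1 - u)) := by
  simp only [squareLoop, Prod.mk.injEq]
  grind

theorem squareLoop_neg (u : ℝ) : squareLoop (-u) = ((squareLoop u).1, -(squareLoop u).2) := by
  simp only [squareLoop, Prod.mk.injEq]
  grind

theorem squareLoop_cases (u : ℝ) :
    |u| ≤ 3 / 4 ∧ squareLoop u = (1, 4 / 3 * u) ∨
    u ∈ Ioc (3 / 4) (7 / 8) ∧ squareLoop u = (13 - 16 * u, 1) ∨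
    7 / 8 < u ∧ squareLoop u = (-1, 8 * (1 - u)) ∨
    -u ∈ Ioc (3 / 4) (7 / 8) ∧ squareLoop u = (13 + 16 * u, -1) ∨
    7 / 8 < -u ∧ squareLoop u = (-1, -8 * (1 + u)) := by
  have hneg := squareLoop_neg (-u)
  rw [neg_neg] at hneg
  rcases le_or_gt |u| (3 / 4) with h | h
  · exact .inl ⟨h, squareLoop_of_abs_le h⟩
  rcases lt_abs.1 h with h | h
  · rcases le_or_gt u (7 / 8) with h' | h'
    · exact .inr (.inl ⟨⟨h, h'⟩, squareLoop_of_mem_Icc ⟨h.le, h'⟩⟩)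
    · exact .inr (.inr (.inl ⟨h', squareLoop_of_ge h'.le⟩))
  · rcases le_or_gt (-u) (7 / 8) with h' | h'
    · refine .inr (.inr (.inr (.inl ⟨⟨h, h'⟩, ?_⟩)))
      rw [hneg, squareLoop_of_mem_Icc ⟨h.le, h'⟩, mul_neg, sub_neg_eq_add]
    · refine .inr (.inr (.inr (.inr ⟨h', ?_⟩)))
      rw [hneg, squareLoop_of_ge h'.le, sub_neg_eq_add, neg_mul]

theorem norm_squareLoop {u : ℝ} (hu : u ∈ Icc (-1) 1) : ‖squareLoop u‖ = 1 := by
  obtain ⟨h₁, h₂⟩ := hu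
  rcases squareLoop_cases u with ⟨h, e⟩ | ⟨h, e⟩ | ⟨h, e⟩ | ⟨h, e⟩ | ⟨h, e⟩ <;>
    rw [e, norm_prod_eq_one_iff] <;> grind

theorem squareLoop_eq_squareLoop_iff {u v : ℝ} (hu : u ∈ Icc (-1) 1) (hv : v ∈ Icc (-1) 1) :
    squareLoop u = squareLoop v ↔ u = v ∨ |u| = 1 ∧ |v| = 1 := by
  obtain ⟨hu₁, hu₂⟩ := hu
  obtain ⟨hv₁, hv₂⟩ := hv
  rw [abs_eq zero_le_one, abs_eq zero_le_one]
  rcases squareLoop_cases u with ⟨h, e⟩ | ⟨h, e⟩ | ⟨h, e⟩ | ⟨h, e⟩ | ⟨h, e⟩ <;>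
    rcases squareLoop_cases v with ⟨h', e'⟩ | ⟨h', e'⟩ | ⟨h', e'⟩ | ⟨h', e'⟩ | ⟨h', e'⟩ <;>
    rw [e, e', Prod.mk.injEq] <;> clear e e' <;> grind [abs_le]

theorem exists_squareLoop_eq {p : ℝ × ℝ} (hp : ‖p‖ = 1) : ∃ u ∈ Icc (-1) 1, squareLoop u = p := by
  obtain ⟨x, y⟩ := p
  obtain ⟨hx, hy, h | h⟩ := norm_prod_eq_one_iff.1 hp <;>
    rcases eq_or_eq_neg_of_abs_eq h with rfl | rfl
  · refine ⟨3 / 4 * y, by grind, ?_⟩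
    rw [squareLoop_of_abs_le (by grind), ← mul_assoc]
    norm_num
  · wlog h₀ : 0 ≤ y generalizing y
    · obtain ⟨u, hu, e⟩ := this (-y) (by simpa using hp) (by simpa using hy) (by linarith)
      exact ⟨-u, by grind, by rw [squareLoop_neg, e, neg_neg]⟩
    refine ⟨1 - y / 8, by grind, ?_⟩
    rw [squareLoop_of_ge (by grind), sub_sub_cancel, mul_div_cancel₀ _ (by norm_num)]
  · refine ⟨(13 - x) / 16, by grind, ?_⟩
    rw [squareLoop_of_mem_Icc (by grind), mul_div_cancel₀ _ (by norm_num), sub_sub_cancel]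
  · refine ⟨-((13 - x) / 16), by grind, ?_⟩
    rw [squareLoop_neg, squareLoop_of_mem_Icc (by grind), mul_div_cancel₀ _ (by norm_num),
      sub_sub_cancel]

/-- A piecewise linear parametrization of the top, the right-hand side and the bottom of
`[0, 1] × [-1, 1]` by `[0, 1]`. -/
def squareArc (t : ℝ) : ℝ × ℝ := (min 1 (min (4 * t) (4 * (1 - t))), max (-1) (min 1 (2 - 4 * t)))

theorem continuous_squareArc : Continuous squareArc := by
  unfold squareArc
  fun_prop

theorem squareArc_of_le {t : ℝ} (h : t ≤ 1 / 4) : squareArc t = (4 * t, 1) := by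
  simp only [squareArc, Prod.mk.injEq]
  grind

theorem squareArc_of_mem_Icc {t : ℝ} (h : t ∈ Icc (1 / 4) (3 / 4)) :
    squareArc t = (1, 2 - 4 * t) := by
  simp only [squareArc, Prod.mk.injEq]
  grind

theorem squareArc_of_ge {t : ℝ} (h : 3 / 4 ≤ t) : squareArc t = (4 * (1 - t), -1) := by
  simp only [squareArc, Prod.mk.injEq]
  grind

theorem squareArc_cases (t : ℝ) :
    t ≤ 1 / 4 ∧ squareArc t = (4 * t, 1) ∨
    t ∈ Ioo (1 / 4) (3 / 4) ∧ squareArc t = (1, 2 - 4 * t) ∨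
    3 / 4 ≤ t ∧ squareArc t = (4 * (1 - t), -1) := by
  rcases le_or_gt t (1 / 4) with h | h
  · exact .inl ⟨h, squareArc_of_le h⟩
  rcases lt_or_ge t (3 / 4) with h' | h'
  · exact .inr (.inl ⟨⟨h, h'⟩, squareArc_of_mem_Icc ⟨h.le, h'.le⟩⟩)
  · exact .inr (.inr ⟨h', squareArc_of_ge h'⟩)

theorem squareArc_injective : Function.Injective squareArc := by
  intro s t hst
  rcases squareArc_cases s with ⟨h, e⟩ | ⟨⟨h₁, h₂⟩, e⟩ | ⟨h, e⟩ <;>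
    rcases squareArc_cases t with ⟨h', e'⟩ | ⟨⟨h₁', h₂'⟩, e'⟩ | ⟨h', e'⟩ <;>
    rw [e, e', Prod.mk.injEq] at hst <;> linarith

theorem squareArc_fst_nonneg {t : ℝ} (ht : t ∈ Icc 0 1) : 0 ≤ (squareArc t).1 :=
  le_min zero_le_one (le_min (by linarith [ht.1]) (by linarith [ht.2]))

theorem squareArc_fst_le_one (t : ℝ) : (squareArc t).1 ≤ 1 := min_le_left _ _

theorem abs_squareArc_snd_le_one (t : ℝ) : |(squareArc t).2| ≤ 1 :=
  abs_le.2 ⟨le_max_left _ _, max_le (by norm_num) (min_le_left _ _)⟩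

theorem squareArc_fst_eq_one_or_abs_snd_eq_one (t : ℝ) :
    (squareArc t).1 = 1 ∨ |(squareArc t).2| = 1 := by
  rcases squareArc_cases t with ⟨-, e⟩ | ⟨-, e⟩ | ⟨-, e⟩ <;> simp [e]

/-- The thickened square annulus `1/3 ≤ ‖p‖ ≤ 1`: the planar form of `crossBand`. -/
def planarBand (a : ℝ × ℂ) : (ℝ × ℝ) × ℝ := ((2 / 3 + 4 / 3 * a.2.re) • squareLoop a.1, a.2.im)

/-- A thickened planar band attached to the right-hand side of the square annulus: the planar
form of `crossHandle`. -/
def planarHandle (a : ℝ × ℂ) : (ℝ × ℝ) × ℝ :=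
  ((1 + (1 + 4 / 3 * a.2.re) * (squareArc a.1).1, (2 / 3 + 4 / 3 * a.2.re) * (squareArc a.1).2),
    a.2.im)

theorem continuous_planarBand : Continuous planarBand := by
  have := continuous_squareLoop
  unfold planarBand
  fun_prop

theorem continuous_planarHandle : Continuous planarHandle := by
  have := continuous_squareArc
  unfold planarHandle
  fun_prop

theorem norm_planarBand_fst {u : ℝ} (hu : u ∈ Icc (-1) 1) (hw : w ∈ crossSection) :
    ‖(planarBand (u, w)).1‖ = 2 / 3 + 4 / 3 * w.re := by
  have hre := abs_le.1 (mem_crossSection.1 hw).1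
  rw [planarBand, norm_smul, norm_squareLoop hu, mul_one, Real.norm_of_nonneg (by linarith)]

theorem planarBand_eq_planarBand_iff {u v : ℝ} {w w' : ℂ} (hu : u ∈ Icc (-1) 1)
    (hv : v ∈ Icc (-1) 1) (hw : w ∈ crossSection) (hw' : w' ∈ crossSection) :
    planarBand (u, w) = planarBand (v, w') ↔ w = w' ∧ (u = v ∨ |u| = 1 ∧ |v| = 1) := by
  rw [← squareLoop_eq_squareLoop_iff hu hv]
  constructor
  · intro h
    have hre : w.re = w'.re := by
      have hnorm := norm_planarBand_fst hu hw
      rw [h, norm_planarBand_fst hv hw'] at hnorm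
      linarith
    obtain rfl : w = w' := Complex.ext hre (congrArg Prod.snd h)
    have hpos := abs_le.1 (mem_crossSection.1 hw).1
    exact ⟨rfl, smul_right_injective (ℝ × ℝ) (r := 2 / 3 + 4 / 3 * w.re) (by linarith)
      (congrArg Prod.fst h)⟩
  · rintro ⟨rfl, h⟩
    simp only [planarBand, h]

theorem max_mul_squareArc {c : ℝ} (hc : 1 / 3 ≤ c) (t : ℝ) :
    max (c * (squareArc t).1) (|(c - 1 / 3) * (squareArc t).2| + 1 / 3) = c := by
  have h₁ := squareArc_fst_le_one t
  have h₂ := abs_squareArc_snd_le_one t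
  rw [abs_mul, abs_of_nonneg (sub_nonneg.2 hc)]
  rcases squareArc_fst_eq_one_or_abs_snd_eq_one t with h | h <;> rw [h]
  · rw [max_eq_left (by nlinarith), mul_one]
  · rw [max_eq_right (by nlinarith)]
    ring

theorem planarHandle_eq_planarHandle_iff {s t : ℝ} {w w' : ℂ} (hw : w ∈ crossSection)
    (hw' : w' ∈ crossSection) :
    planarHandle (s, w) = planarHandle (t, w') ↔ w = w' ∧ s = t := by
  have hre := abs_le.1 (mem_crossSection.1 hw).1
  have hre' := abs_le.1 (mem_crossSection.1 hw').1
  refine ⟨fun h => ?_, by rintro ⟨rfl, rfl⟩; rfl⟩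
  simp only [planarHandle, Prod.mk.injEq, add_right_inj] at h
  obtain ⟨⟨hx, hy⟩, him⟩ := h
  have hre_eq : w.re = w'.re := by
    have hmax := max_mul_squareArc (c := 1 + 4 / 3 * w.re) (by linarith) s
    have hmax' := max_mul_squareArc (c := 1 + 4 / 3 * w'.re) (by linarith) t
    rw [← hx, show 1 + 4 / 3 * w'.re - 1 / 3 = 2 / 3 + 4 / 3 * w'.re by ring, ← hy,
      show 2 / 3 + 4 / 3 * w.re = 1 + 4 / 3 * w.re - 1 / 3 by ring, hmax] at hmax'
    linarith
  rw [hre_eq] at hx hy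
  refine ⟨Complex.ext hre_eq him, squareArc_injective (Prod.ext ?_ ?_)⟩
  · exact mul_left_cancel₀ (by linarith) hx
  · exact mul_left_cancel₀ (by linarith) hy

theorem squareLoop_fst_eq_one_iff {u : ℝ} : (squareLoop u).1 = 1 ↔ |u| ≤ 3 / 4 := by
  simp only [squareLoop]
  grind

theorem squareArc_fst_eq_zero_iff {t : ℝ} : (squareArc t).1 = 0 ↔ t = 0 ∨ t = 1 := by
  simp only [squareArc]
  grind

theorem planarBand_eq_planarHandle_iff {u t : ℝ} {w w' : ℂ} (ht : t ∈ Icc 0 1)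
    (hw : w ∈ crossSection) (hw' : w' ∈ crossSection) :
    planarBand (u, w) = planarHandle (t, w') ↔ w.re = 1 / 4 ∧ w.im = w'.im ∧
      (t = 0 ∧ u = 1 / 2 + w'.re ∨ t = 1 ∧ u = -(1 / 2) - w'.re) := by
  have hre := abs_le.1 (mem_crossSection.1 hw).1
  have hre' := abs_le.1 (mem_crossSection.1 hw').1
  simp only [planarBand, planarHandle, Prod.ext_iff, Prod.smul_fst, Prod.smul_snd, smul_eq_mul]
  constructor
  · rintro ⟨⟨hx, hy⟩, him⟩
    -- The band lies in `x ≤ 1` and the handle in `x ≥ 1`.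
    have hloop : (squareLoop u).1 ≤ 1 := max_le (by norm_num) (min_le_left _ _)
    have harc := squareArc_fst_nonneg ht
    have hre₁ : w.re = 1 / 4 := by nlinarith
    have hu := squareLoop_fst_eq_one_iff.1 (by nlinarith : (squareLoop u).1 = 1)
    have ht' := squareArc_fst_eq_zero_iff.1 (by nlinarith : (squareArc t).1 = 0)
    refine ⟨hre₁, him, ?_⟩
    rw [squareLoop_of_abs_le hu, hre₁] at hy
    rcases ht' with rfl | rfl
    · rw [squareArc_of_le (by norm_num)] at hy
      exact .inl ⟨rfl, by linarith⟩
    · rw [squareArc_of_ge (by norm_num)] at hy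
      exact .inr ⟨rfl, by linarith⟩
  · rintro ⟨h₁, h₂, ⟨rfl, rfl⟩ | ⟨rfl, rfl⟩⟩
    · rw [squareLoop_of_abs_le (by grind), squareArc_of_le (by norm_num), h₁, h₂]
      refine ⟨⟨?_, ?_⟩, rfl⟩ <;> ring
    · rw [squareLoop_of_abs_le (by grind), squareArc_of_ge (by norm_num), h₁, h₂]
      refine ⟨⟨?_, ?_⟩, rfl⟩ <;> ring

/-- The rectangle `[-1, 7/3] × [-1, 1]` with two open square holes of side `2/3` removed. -/
def twoHoledRectangle : Set (ℝ × ℝ) :=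
  {p | p.1 ∈ Icc (-1) (7 / 3) ∧ |p.2| ≤ 1 ∧ (1 / 3 ≤ |p.1| ∨ 1 / 3 ≤ |p.2|) ∧
    (p.1 ≤ 1 ∨ 5 / 3 ≤ p.1 ∨ 1 / 3 ≤ |p.2|)}

theorem planarBand_mem {u : ℝ} (hu : u ∈ Icc (-1) 1) (hw : w ∈ crossSection) :
    planarBand (u, w) ∈ twoHoledRectangle ×ˢ Icc (-1 / 4) (1 / 4) := by
  obtain ⟨hre, him⟩ := mem_crossSection.1 hw
  rw [abs_le] at hre him
  have hnorm := norm_planarBand_fst hu hw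
  refine ⟨?_, by rwa [neg_div]⟩
  generalize (planarBand (u, w)).1 = q at hnorm
  rw [Prod.norm_def, Real.norm_eq_abs, Real.norm_eq_abs] at hnorm
  simp only [twoHoledRectangle, mem_ofPred_eq, mem_Icc]
  grind

theorem planarHandle_mem {t : ℝ} (ht : t ∈ Icc 0 1) (hw : w ∈ crossSection) :
    planarHandle (t, w) ∈ twoHoledRectangle ×ˢ Icc (-1 / 4) (1 / 4) := by
  obtain ⟨hre, him⟩ := mem_crossSection.1 hw
  rw [abs_le] at hre him
  have h₀ := squareArc_fst_nonneg ht
  have h₁ := squareArc_fst_le_one t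
  have h₂ := abs_squareArc_snd_le_one t
  have habs : |(2 / 3 + 4 / 3 * w.re) * (squareArc t).2| =
      (2 / 3 + 4 / 3 * w.re) * |(squareArc t).2| := by
    rw [abs_mul, abs_of_nonneg (by linarith)]
  have hx : 1 ≤ 1 + (1 + 4 / 3 * w.re) * (squareArc t).1 := by nlinarith
  refine ⟨⟨⟨?_, ?_⟩, ?_, .inl (le_abs.2 (.inl ?_)), .inr ?_⟩, by rwa [neg_div]⟩
  · simp only [planarHandle]
    linarith
  · simp only [planarHandle]
    nlinarith
  · simp only [planarHandle, habs]
    nlinarith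
  · simp only [planarHandle]
    linarith
  · simp only [planarHandle, habs]
    rcases squareArc_fst_eq_one_or_abs_snd_eq_one t with h | h <;> rw [h]
    · exact .inl (by linarith)
    · exact .inr (by linarith)

theorem exists_planarBand_eq {p : ℝ × ℝ} {z : ℝ} (h₁ : 1 / 3 ≤ ‖p‖) (h₂ : ‖p‖ ≤ 1)
    (hz : |z| ≤ 1 / 4) : ∃ u ∈ Icc (-1) 1, ∃ w ∈ crossSection, planarBand (u, w) = (p, z) := by
  have hp : p ≠ 0 := norm_pos_iff.1 (by linarith)
  obtain ⟨u, hu, hup⟩ := exists_squareLoop_eq (isGauge_norm.apply_radial zero_le_one hp)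
  refine ⟨u, hu, ⟨(‖p‖ - 2 / 3) * (3 / 4), z⟩, mem_crossSection.2 ⟨?_, hz⟩, ?_⟩
  · exact abs_le.2 ⟨by linarith, by linarith⟩
  · rw [planarBand, hup, show 2 / 3 + 4 / 3 * ((‖p‖ - 2 / 3) * (3 / 4)) = ‖p‖ by ring, radial,
      one_div, smul_inv_smul₀ (norm_ne_zero_iff.2 hp)]

theorem exists_mul_squareArc_eq {c x y : ℝ} (hc : 1 / 3 < c) (hx : 0 ≤ x)
    (h : max x (|y| + 1 / 3) = c) :
    ∃ t ∈ Icc 0 1, c * (squareArc t).1 = x ∧ (c - 1 / 3) * (squareArc t).2 = y := by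
  have hc₀ : 0 < c := by linarith
  have hc₁ : 0 < c - 1 / 3 := by linarith
  rcases max_choice x (|y| + 1 / 3) with hmax | hmax <;> rw [hmax] at h
  · have hy : |y / (c - 1 / 3)| ≤ 1 := by
      rw [abs_div, abs_of_pos hc₁, div_le_one hc₁]
      linarith [hmax ▸ le_max_right x (|y| + 1 / 3)]
    rw [abs_le] at hy
    refine ⟨(2 - y / (c - 1 / 3)) / 4, ⟨by linarith, by linarith⟩, ?_⟩
    rw [squareArc_of_mem_Icc ⟨by linarith, by linarith⟩]
    refine ⟨by rw [mul_one, h], ?_⟩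
    rw [show 2 - 4 * ((2 - y / (c - 1 / 3)) / 4) = y / (c - 1 / 3) by ring]
    exact mul_div_cancel₀ _ hc₁.ne'
  · have hx₀ : 0 ≤ x / c := div_nonneg hx hc₀.le
    have hx₁ : x / c ≤ 1 := by
      rw [div_le_one hc₀, ← h, ← hmax]
      exact le_max_left _ _
    rcases abs_choice y with hy | hy <;> rw [hy] at h
    · refine ⟨x / c / 4, ⟨by linarith, by linarith⟩, ?_⟩
      rw [squareArc_of_le (by linarith)]
      exact ⟨by field_simp, by linarith⟩
    · refine ⟨1 - x / c / 4, ⟨by linarith, by linarith⟩, ?_⟩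
      rw [squareArc_of_ge (by linarith)]
      exact ⟨by field_simp; ring, by linarith⟩

theorem exists_planarHandle_eq {p : ℝ × ℝ} {z : ℝ} (hp : p ∈ twoHoledRectangle) (h₁ : 1 < p.1)
    (hz : |z| ≤ 1 / 4) : ∃ t ∈ Icc 0 1, ∃ w ∈ crossSection, planarHandle (t, w) = (p, z) := by
  obtain ⟨⟨-, hx⟩, hy, -, hxy⟩ := hp
  set c := max (p.1 - 1) (|p.2| + 1 / 3) with hc
  have hc₁ : 2 / 3 ≤ c := by grind
  have hc₂ : c ≤ 4 / 3 := max_le (by linarith) (by linarith)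
  obtain ⟨t, ht, hx, hy⟩ := exists_mul_squareArc_eq (by linarith) (by linarith) hc.symm
  refine ⟨t, ht, ⟨(c - 1) * (3 / 4), z⟩, mem_crossSection.2 ⟨?_, hz⟩, ?_⟩
  · exact abs_le.2 ⟨by linarith, by linarith⟩
  · rw [planarHandle, show 1 + 4 / 3 * ((c - 1) * (3 / 4)) = c by ring,
      show 2 / 3 + 4 / 3 * ((c - 1) * (3 / 4)) = c - 1 / 3 by ring, hx, hy, add_sub_cancel]

theorem image_planarBand_union_image_planarHandle :
    planarBand '' (Icc (-1) 1 ×ˢ crossSection) ∪ planarHandle '' (Icc 0 1 ×ˢ crossSection) =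
      twoHoledRectangle ×ˢ Icc (-1 / 4) (1 / 4) := by
  refine subset_antisymm ?_ ?_
  · rintro _ (⟨a, ha, rfl⟩ | ⟨a, ha, rfl⟩)
    exacts [planarBand_mem ha.1 ha.2, planarHandle_mem ha.1 ha.2]
  · rintro ⟨p, z⟩ ⟨hp, hz⟩
    rw [neg_div, mem_Icc, ← abs_le] at hz
    rcases le_or_gt p.1 1 with h | h
    · obtain ⟨⟨hx, -⟩, hy, hxy, -⟩ := hp
      obtain ⟨u, hu, w, hw, e⟩ := exists_planarBand_eq (le_max_iff.2 hxy)
        (max_le (abs_le.2 ⟨hx, h⟩) hy) hz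
      exact .inl ⟨(u, w), ⟨hu, hw⟩, e⟩
    · obtain ⟨t, ht, w, hw, e⟩ := exists_planarHandle_eq hp h hz
      exact .inr ⟨(t, w), ⟨ht, hw⟩, e⟩

theorem nonempty_homeomorph_cross_planar :
    Nonempty (normRegion crossProfile ≃ₜ
      (twoHoledRectangle ×ˢ Icc (-1 / 4) (1 / 4) : Set ((ℝ × ℝ) × ℝ))) := by
  rw [← image_crossBand_union_image_crossHandle, ← image_planarBand_union_image_planarHandle]
  refine nonempty_homeomorph_union_of_fibres (isCompact_Icc.prod isCompact_crossSection)
    (isCompact_Icc.prod isCompact_crossSection) continuous_crossBand.continuousOn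
    continuous_crossHandle.continuousOn continuous_planarBand.continuousOn
    continuous_planarHandle.continuousOn ?_ ?_ ?_
  · rintro ⟨u, w⟩ ⟨hu, hw⟩ ⟨v, w'⟩ ⟨hv, hw'⟩
    rw [crossBand_eq_crossBand_iff hu hv hw hw', planarBand_eq_planarBand_iff hu hv hw hw']
  · rintro ⟨s, w⟩ ⟨hs, hw⟩ ⟨t, w'⟩ ⟨ht, hw'⟩
    rw [crossHandle_eq_crossHandle_iff hs ht hw hw', planarHandle_eq_planarHandle_iff hw hw']
  · rintro ⟨u, w⟩ ⟨hu, hw⟩ ⟨t, w'⟩ ⟨ht, hw'⟩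
    rw [crossBand_eq_crossHandle_iff hu ht hw hw', planarBand_eq_planarHandle_iff ht hw hw']

end Rotation

/-! ### Annuli between two gauges -/

section Annulus

variable {E : Type*} [NormedAddCommGroup E] [NormedSpace ℝ E]

/-- Two gauges whose unit levels are disjoint, that of `b` lying inside that of `a`. -/
structure IsGaugePair (a b : E → ℝ) : Prop where
  left : IsGauge a
  right : IsGauge b
  lt : ∀ {p}, p ≠ 0 → a p < b p

/-- The closed region between the unit level of `b` (inside) and that of `a` (outside). -/
def gaugeAnnulus (a b : E → ℝ) : Set E := {p | a p ≤ 1 ∧ 1 ≤ b p}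

/-- The affine coordinate of `p` on the segment cut out by `gaugeAnnulus a b` on the ray through
`p`: it is `0` on the inner and `1` on the outer boundary. -/
def annulusHeight (a b : E → ℝ) (p : E) : ℝ := a p * (b p - 1) / (b p - a p)

/-- The point with affine coordinate `t` on the ray through `p`; inverse to `annulusHeight`. -/
def annulusPoint (a b : E → ℝ) (t : ℝ) (p : E) : E := ((1 - t) / b p + t / a p) • p

/-- The ray-preserving homeomorphism of `gaugeAnnulus a b` onto `gaugeAnnulus a' b'` which is
affine on each ray. -/
def annulusMap (a b a' b' : E → ℝ) (p : E) : E := annulusPoint a' b' (annulusHeight a b p) p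

variable {a b a' b' : E → ℝ} {p : E} {s t : ℝ}

theorem IsGaugePair.ne_zero (h : IsGaugePair a b) (hp : p ∈ gaugeAnnulus a b) : p ≠ 0 := by
  rintro rfl
  linarith [hp.2, h.right.zero]

theorem IsGaugePair.scale_pos (h : IsGaugePair a b) (ht : t ∈ Icc 0 1) (hp : p ≠ 0) :
    0 < (1 - t) / b p + t / a p := by
  have ha := h.left.pos hp
  have hb := h.right.pos hp
  rcases ht.1.eq_or_lt with rfl | ht₀
  · simpa using hb
  · exact add_pos_of_nonneg_of_pos (div_nonneg (sub_nonneg.2 ht.2) hb.le) (div_pos ht₀ ha)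

theorem IsGaugePair.left_annulusPoint (h : IsGaugePair a b) (ht : t ∈ Icc 0 1) (hp : p ≠ 0) :
    a (annulusPoint a b t p) = 1 - (1 - t) * ((b p - a p) / b p) := by
  have ha := h.left.pos hp
  have hb := h.right.pos hp
  rw [annulusPoint, h.left.smul (h.scale_pos ht hp).le]
  field_simp
  ring

theorem IsGaugePair.right_annulusPoint (h : IsGaugePair a b) (ht : t ∈ Icc 0 1) (hp : p ≠ 0) :
    b (annulusPoint a b t p) = 1 + t * ((b p - a p) / a p) := by
  have ha := h.left.pos hp
  have hb := h.right.pos hp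
  rw [annulusPoint, h.right.smul (h.scale_pos ht hp).le]
  field_simp
  ring

theorem IsGaugePair.annulusPoint_mem (h : IsGaugePair a b) (ht : t ∈ Icc 0 1) (hp : p ≠ 0) :
    annulusPoint a b t p ∈ gaugeAnnulus a b := by
  have hab := sub_nonneg.2 (h.lt hp).le
  refine ⟨?_, ?_⟩
  · rw [h.left_annulusPoint ht hp, sub_le_self_iff]
    exact mul_nonneg (sub_nonneg.2 ht.2) (div_nonneg hab (h.right.nonneg p))
  · rw [h.right_annulusPoint ht hp, le_add_iff_nonneg_right]
    exact mul_nonneg ht.1 (div_nonneg hab (h.left.nonneg p))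

theorem IsGaugePair.annulusHeight_annulusPoint (h : IsGaugePair a b) (ht : t ∈ Icc 0 1)
    (hp : p ≠ 0) : annulusHeight a b (annulusPoint a b t p) = t := by
  have ha := h.left.pos hp
  have hscale := h.scale_pos ht hp
  have hab := sub_pos.2 (h.lt hp)
  rw [annulusHeight, h.right_annulusPoint ht hp, add_sub_cancel_left,
    ← h.right_annulusPoint ht hp, annulusPoint, h.left.smul hscale.le, h.right.smul hscale.le,
    ← mul_sub, mul_assoc, mul_div_mul_left _ _ hscale.ne']
  field_simp

theorem IsGaugePair.annulusPoint_smul (h : IsGaugePair a b) (hs : 0 < s) (hp : p ≠ 0) :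
    annulusPoint a b t (s • p) = annulusPoint a b t p := by
  have ha := h.left.pos hp
  have hb := h.right.pos hp
  rw [annulusPoint, h.left.smul hs.le, h.right.smul hs.le, smul_smul, annulusPoint]
  congr 1
  field_simp

theorem IsGaugePair.annulusPoint_annulusHeight (h : IsGaugePair a b) (hp : p ≠ 0) :
    annulusPoint a b (annulusHeight a b p) p = p := by
  have ha := h.left.pos hp
  have hb := h.right.pos hp
  have hab := sub_pos.2 (h.lt hp)
  rw [annulusPoint, annulusHeight]
  convert one_smul ℝ p
  field_simp
  ring

theorem IsGaugePair.annulusHeight_mem (h : IsGaugePair a b) (hp : p ∈ gaugeAnnulus a b) :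
    annulusHeight a b p ∈ Icc 0 1 := by
  have hab := sub_pos.2 (h.lt (h.ne_zero hp))
  have hb := h.right.pos (h.ne_zero hp)
  refine ⟨div_nonneg (mul_nonneg (h.left.nonneg p) (sub_nonneg.2 hp.2)) hab.le, ?_⟩
  rw [annulusHeight, div_le_one hab]
  nlinarith [hp.1]

theorem IsGaugePair.mapsTo_annulusMap (h : IsGaugePair a b) (h' : IsGaugePair a' b') :
    MapsTo (annulusMap a b a' b') (gaugeAnnulus a b) (gaugeAnnulus a' b') :=
  fun _ hp => h'.annulusPoint_mem (h.annulusHeight_mem hp) (h.ne_zero hp)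

theorem IsGaugePair.leftInvOn_annulusMap (h : IsGaugePair a b) (h' : IsGaugePair a' b') :
    LeftInvOn (annulusMap a' b' a b) (annulusMap a b a' b') (gaugeAnnulus a b) := by
  intro p hp
  have hp₀ := h.ne_zero hp
  have ht := h.annulusHeight_mem hp
  rw [annulusMap, annulusMap, h'.annulusHeight_annulusPoint ht hp₀, annulusPoint.eq_1 a' b',
    h.annulusPoint_smul (h'.scale_pos ht hp₀) hp₀, h.annulusPoint_annulusHeight hp₀]

theorem IsGaugePair.bijOn_annulusMap (h : IsGaugePair a b) (h' : IsGaugePair a' b') :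
    BijOn (annulusMap a b a' b') (gaugeAnnulus a b) (gaugeAnnulus a' b') :=
  InvOn.bijOn ⟨h.leftInvOn_annulusMap h', h'.leftInvOn_annulusMap h⟩
    (h.mapsTo_annulusMap h') (h'.mapsTo_annulusMap h)

theorem IsGaugePair.continuousOn_annulusMap (h : IsGaugePair a b) (h' : IsGaugePair a' b') :
    ContinuousOn (annulusMap a b a' b') (gaugeAnnulus a b) := by
  have hheight : ContinuousOn (annulusHeight a b) (gaugeAnnulus a b) :=
    (h.left.continuous.mul (h.right.continuous.sub continuous_const)).continuousOn.div
      (h.right.continuous.sub h.left.continuous).continuousOn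
      fun p hp => (sub_pos.2 (h.lt (h.ne_zero hp))).ne'
  exact (((continuousOn_const.sub hheight).div h'.right.continuous.continuousOn
    fun p hp => (h'.right.pos (h.ne_zero hp)).ne').add
    (hheight.div h'.left.continuous.continuousOn
      fun p hp => (h'.left.pos (h.ne_zero hp)).ne')).smul continuousOn_id

theorem IsGaugePair.annulusMap_eq_self (h : IsGaugePair a b) (hp : p ≠ 0) (ha : a p = 1)
    (ha' : a' p = 1) : annulusMap a b a' b' p = p := by
  have hab := sub_pos.2 (h.lt hp)
  rw [ha] at hab
  rw [annulusMap, annulusPoint, annulusHeight, ha, ha', one_mul, div_self hab.ne', sub_self,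
    zero_div, zero_add, div_one, one_smul]

/-- The hypotheses on `f` say that the unit levels of `a` and `a'` share their face on `{f = 1}`. -/
theorem IsGaugePair.apply_annulusMap_eq_one_iff {f : E → ℝ} (h : IsGaugePair a b)
    (h' : IsGaugePair a' b') (hf : ∀ q, f q ≤ a q) (hf' : ∀ q, f q ≤ a' q)
    (hface : ∀ q, f q = 1 → (a q ≤ 1 ↔ a' q ≤ 1)) (hp : p ∈ gaugeAnnulus a b) :
    f (annulusMap a b a' b' p) = 1 ↔ f p = 1 := by
  have heq {q : E} (hq : f q = 1) (haq : a q ≤ 1) : a q = 1 ∧ a' q = 1 :=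
    ⟨haq.antisymm (hq ▸ hf q), ((hface q hq).1 haq).antisymm (hq ▸ hf' q)⟩
  constructor <;> intro h₁
  · have hmem := h.mapsTo_annulusMap h' hp
    obtain ⟨ha, ha'⟩ := heq h₁ ((hface _ h₁).2 hmem.1)
    rwa [← h.leftInvOn_annulusMap h' hp, h'.annulusMap_eq_self (h'.ne_zero hmem) ha' ha]
  · obtain ⟨ha, ha'⟩ := heq h₁ hp.1
    rwa [h.annulusMap_eq_self (h.ne_zero hp) ha ha']

theorem IsGauge.le_of_forall_le_one (ha : IsGauge a) {f : E →ₗ[ℝ] ℝ}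
    (h : ∀ q, a q ≤ 1 → f q ≤ 1) (p : E) : f p ≤ a p := by
  rcases eq_or_ne p 0 with rfl | hp
  · rw [map_zero, ha.zero]
  have h₁ := h _ (ha.apply_radial zero_le_one hp).le
  rwa [radial, map_smul, smul_eq_mul, div_mul_eq_mul_div, one_mul, div_le_one (ha.pos hp)] at h₁

variable {K L : Set E}

theorem isGauge_gauge (hK : Convex ℝ K) (hK₀ : K ∈ 𝓝 0) (hb : Bornology.IsBounded K) :
    IsGauge (gauge K) where
  continuous := continuous_gauge hK hK₀
  smul ht p := by rw [gauge_smul_of_nonneg ht, smul_eq_mul]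
  pos := (gauge_pos (absorbent_nhds_zero hK₀) ((NormedSpace.isVonNBounded_iff ℝ).2 hb)).2

theorem isGaugePair_gauge (hK : Convex ℝ K) (hL : Convex ℝ L) (hL₀ : L ∈ 𝓝 0)
    (hb : Bornology.IsBounded K) (hLK : closure L ⊆ interior K) :
    IsGaugePair (gauge K) (gauge L) := by
  have hLK' : L ⊆ K := subset_closure.trans (hLK.trans interior_subset)
  have hK₀ : K ∈ 𝓝 0 := Filter.mem_of_superset hL₀ hLK'
  have hgK := isGauge_gauge hK hK₀ hb
  have hgL := isGauge_gauge hL hL₀ (hb.subset hLK')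
  refine ⟨hgK, hgL, fun {p} hp => ?_⟩
  have hmem : radial (gauge L) 1 p ∈ interior K :=
    hLK ((gauge_le_one_iff_mem_closure hL hL₀).1 (hgL.apply_radial zero_le_one hp).le)
  rw [← gauge_lt_one_iff_mem_interior hK hK₀, radial,
    hgK.smul (div_nonneg zero_le_one (hgL.nonneg p))] at hmem
  rwa [div_mul_eq_mul_div, one_mul, div_lt_one (hgL.pos hp)] at hmem

theorem gaugeAnnulus_gauge (hK : Convex ℝ K) (hK₀ : K ∈ 𝓝 0) (hKc : IsClosed K)
    (hL : Convex ℝ L) (hL₀ : L ∈ 𝓝 0) (hLo : IsOpen L) :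
    gaugeAnnulus (gauge K) (gauge L) = K \ L := by
  ext p
  rw [gaugeAnnulus, mem_ofPred_eq, gauge_le_one_iff_mem_closure hK hK₀, hKc.closure_eq, ← not_lt,
    gauge_lt_one_iff_mem_interior hL hL₀, hLo.interior_eq, mem_sdiff]

end Annulus

/-! ### The model handlebody of genus two -/

/-- Reflection of the plane in the line `x = c`. -/
def reflectFst (c : ℝ) (p : ℝ × ℝ) : ℝ × ℝ := (2 * c - p.1, p.2)

/-- The part of a planar set to the left of the line `x = c`. -/
def leftPart (c : ℝ) (s : Set (ℝ × ℝ)) : Set (ℝ × ℝ) := {p ∈ s | p.1 ≤ c}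

theorem reflectFst_reflectFst (c : ℝ) (p : ℝ × ℝ) : reflectFst c (reflectFst c p) = p :=
  Prod.ext (sub_sub_cancel _ _) rfl

theorem continuous_reflectFst (c : ℝ) : Continuous (reflectFst c) := by
  unfold reflectFst
  fun_prop

theorem eq_reflectFst_iff {c : ℝ} {p q : ℝ × ℝ} (hp : p.1 ≤ c) (hq : q.1 ≤ c) :
    p = reflectFst c q ↔ p = q ∧ q.1 = c := by
  simp only [reflectFst, Prod.ext_iff]
  constructor
  · rintro ⟨h₁, h₂⟩
    exact ⟨⟨by linarith, h₂⟩, by linarith⟩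
  · rintro ⟨⟨h₁, h₂⟩, h₃⟩
    exact ⟨by linarith, h₂⟩

theorem leftPart_union_image_reflectFst {c : ℝ} {s : Set (ℝ × ℝ)}
    (hs : MapsTo (reflectFst c) s s) : leftPart c s ∪ reflectFst c '' leftPart c s = s := by
  refine subset_antisymm ?_ fun p hp => ?_
  · rintro _ (h | ⟨p, h, rfl⟩)
    exacts [h.1, hs h.1]
  · rcases le_total p.1 c with h | h
    · exact .inl ⟨hp, h⟩
    · refine .inr ⟨reflectFst c p, ⟨hs hp, ?_⟩, reflectFst_reflectFst c p⟩
      simp only [reflectFst]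
      linarith

theorem nonempty_homeomorph_of_leftPart {c d : ℝ} {s t : Set (ℝ × ℝ)} {f : ℝ × ℝ → ℝ × ℝ}
    (hsc : IsCompact (leftPart c s)) (hs : MapsTo (reflectFst c) s s)
    (ht : MapsTo (reflectFst d) t t) (hf : ContinuousOn f (leftPart c s))
    (hbij : BijOn f (leftPart c s) (leftPart d t))
    (hline : ∀ p ∈ leftPart c s, (f p).1 = d ↔ p.1 = c) : Nonempty (s ≃ₜ t) := by
  have hs' : id '' leftPart c s ∪ reflectFst c '' leftPart c s = s := by
    rw [image_id, leftPart_union_image_reflectFst hs]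
  have ht' : f '' leftPart c s ∪ (reflectFst d ∘ f) '' leftPart c s = t := by
    rw [image_comp, hbij.image_eq, leftPart_union_image_reflectFst ht]
  rw [← hs', ← ht']
  refine nonempty_homeomorph_union_of_fibres hsc hsc continuousOn_id
    (continuous_reflectFst c).continuousOn hf
    ((continuous_reflectFst d).comp_continuousOn hf) ?_ ?_ ?_
  · exact fun p hp q hq => (hbij.injOn.eq_iff hp hq).symm
  · intro p hp q hq
    rw [Function.comp_apply, Function.comp_apply,
      (Function.LeftInverse.injective (reflectFst_reflectFst d)).eq_iff,
      (Function.LeftInverse.injective (reflectFst_reflectFst c)).eq_iff,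
      hbij.injOn.eq_iff hp hq]
  · intro p hp q hq
    rw [Function.comp_apply, id, eq_reflectFst_iff hp.2 hq.2,
      eq_reflectFst_iff (hbij.mapsTo hp).2 (hbij.mapsTo hq).2, hbij.injOn.eq_iff hp hq,
      hline q hq]

theorem cthickening_prod {X Y : Type*} [PseudoEMetricSpace X] [PseudoEMetricSpace Y] (r : ℝ)
    (s : Set X) (t : Set Y) : cthickening r (s ×ˢ t) = cthickening r s ×ˢ cthickening r t := by
  ext p
  rw [mem_prod, mem_cthickening_iff, mem_cthickening_iff, mem_cthickening_iff, infEDist_prod,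
    max_le_iff]

theorem exists_sq_eq_and_abs_sub_le_iff {r u x : ℝ} (hr : 0 ≤ r) :
    (∃ a, a ^ 2 = u ∧ |x - a| ≤ r) ↔ u ∈ Icc ((max (|x| - r) 0) ^ 2) ((|x| + r) ^ 2) := by
  constructor
  · rintro ⟨a, rfl, h⟩
    rw [← sq_abs a]
    have h₁ := (abs_sub_abs_le_abs_sub x a).trans h
    have h₂ := (abs_sub_abs_le_abs_sub a x).trans (abs_sub_comm x a ▸ h)
    exact ⟨pow_le_pow_left₀ (le_max_right _ _) (max_le (by linarith) (abs_nonneg a)) 2,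
      pow_le_pow_left₀ (abs_nonneg a) (by linarith) 2⟩
  · rintro ⟨hlo, hhi⟩
    have hu : 0 ≤ u := (sq_nonneg _).trans hlo
    have h₁ : |x| - r ≤ √u := (le_max_left _ _).trans (Real.le_sqrt_of_sq_le hlo)
    have h₂ : √u ≤ |x| + r := (Real.sqrt_le_left (by positivity)).2 hhi
    rcases abs_cases x with ⟨hx, -⟩ | ⟨hx, -⟩ <;> rw [hx] at h₁ h₂
    · exact ⟨√u, Real.sq_sqrt hu, abs_le.2 ⟨by linarith, by linarith⟩⟩
    · exact ⟨-√u, by rw [neg_sq, Real.sq_sqrt hu], abs_le.2 ⟨by linarith, by linarith⟩⟩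

/-- The circle of radius one centered at `(c, 0)`. -/
def planarCircle (c : ℝ) : Set (ℝ × ℝ) := {p | (p.1 - c) ^ 2 + p.2 ^ 2 = 1}

theorem isCompact_planarCircle (c : ℝ) : IsCompact (planarCircle c) := by
  refine isCompact_of_isClosed_isBounded (isClosed_eq (by fun_prop) (by fun_prop))
    ((isBounded_closedBall (x := (c, 0)) (r := 1)).subset fun p hp => ?_)
  have hp : (p.1 - c) ^ 2 + p.2 ^ 2 = 1 := hp
  rw [mem_closedBall, Prod.dist_eq, Real.dist_eq, Real.dist_eq, sub_zero]
  exact max_le (abs_le_one_iff_mul_self_le_one.2 (by nlinarith))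
    (abs_le_one_iff_mul_self_le_one.2 (by nlinarith))

theorem mem_cthickening_planarCircle {r c : ℝ} {p : ℝ × ℝ} (hr : 0 ≤ r) :
    p ∈ cthickening r (planarCircle c) ↔
      (max (|p.1 - c| - r) 0) ^ 2 + (max (|p.2| - r) 0) ^ 2 ≤ 1 ∧
        1 ≤ (|p.1 - c| + r) ^ 2 + (|p.2| + r) ^ 2 := by
  have hmono (x : ℝ) : (max (|x| - r) 0) ^ 2 ≤ (|x| + r) ^ 2 :=
    pow_le_pow_left₀ (le_max_right _ _) (max_le (by linarith) (by positivity)) 2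
  rw [(isCompact_planarCircle c).cthickening_eq_biUnion_closedBall hr, ← mem_Icc,
    ← Icc_add_Icc (hmono _) (hmono _), mem_add]
  simp only [← exists_sq_eq_and_abs_sub_le_iff hr, mem_iUnion₂, mem_closedBall, Prod.dist_eq,
    Real.dist_eq, max_le_iff]
  constructor
  · rintro ⟨q, hq, h₁, h₂⟩
    exact ⟨_, ⟨q.1 - c, rfl, by rwa [sub_sub_sub_cancel_right]⟩, _, ⟨q.2, rfl, h₂⟩, hq⟩
  · rintro ⟨_, ⟨a, rfl, h₁⟩, _, ⟨b, rfl, h₂⟩, h⟩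
    refine ⟨(a + c, b), by simpa [planarCircle] using h, ?_, h₂⟩
    rwa [← sub_sub, sub_right_comm]

/-- The planar surface whose thickening is the model handlebody of genus two. -/
def planarModel : Set (ℝ × ℝ) := cthickening (1 / 4) (planarCircle 0 ∪ planarCircle 2)

theorem modelHandlebody_two : ModelHandlebody 2 = planarModel ×ˢ Icc (-1 / 4) (1 / 4) := by
  have hchain : chainCircles 2 = (planarCircle 0 ∪ planarCircle 2) ×ˢ {0} := by
    ext p
    simp [chainCircles, planarCircle, Finset.range_add_one]
    tauto
  rw [ModelHandlebody, if_neg two_ne_zero, hchain, cthickening_prod,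
    cthickening_singleton _ (by norm_num), Real.closedBall_eq_Icc, planarModel]
  norm_num

theorem mem_planarModel {p : ℝ × ℝ} : p ∈ planarModel ↔
    p ∈ cthickening (1 / 4) (planarCircle 0) ∨ p ∈ cthickening (1 / 4) (planarCircle 2) := by
  rw [planarModel, cthickening_union, mem_union]

theorem reflectFst_mem_cthickening_planarCircle {r c d : ℝ} {p : ℝ × ℝ} (hr : 0 ≤ r) :
    reflectFst c p ∈ cthickening r (planarCircle (2 * c - d)) ↔
      p ∈ cthickening r (planarCircle d) := by
  rw [mem_cthickening_planarCircle hr, mem_cthickening_planarCircle hr, reflectFst,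
    sub_sub_sub_cancel_left, abs_sub_comm]

theorem mapsTo_reflectFst_planarModel : MapsTo (reflectFst 1) planarModel planarModel := by
  intro p hp
  rw [mem_planarModel] at hp ⊢
  have hr : (0 : ℝ) ≤ 1 / 4 := by norm_num
  rw [← reflectFst_mem_cthickening_planarCircle (c := 1) (d := 0) hr,
    ← reflectFst_mem_cthickening_planarCircle (c := 1) (d := 2) hr] at hp
  norm_num at hp
  exact hp.symm

/-- To the left of the line of symmetry, a point near the second circle is also near the first. -/
theorem mem_leftPart_planarModel {p : ℝ × ℝ} : p ∈ leftPart 1 planarModel ↔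
    p ∈ cthickening (1 / 4) (planarCircle 0) ∧ p.1 ≤ 1 := by
  have hr : (0 : ℝ) ≤ 1 / 4 := by norm_num
  refine ⟨fun ⟨hp, h⟩ => ⟨(mem_planarModel.1 hp).elim id fun hp => ?_, h⟩,
    fun ⟨hp, h⟩ => ⟨mem_planarModel.2 (.inl hp), h⟩⟩
  rw [mem_cthickening_planarCircle hr] at hp ⊢
  obtain ⟨h₁, h₂⟩ := hp
  rw [abs_of_nonpos (by linarith), neg_sub] at h₁
  have hx : 3 / 4 ≤ p.1 := by nlinarith [le_max_left (2 - p.1 - 1 / 4) 0]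
  rw [sub_zero, abs_of_nonneg (by linarith)]
  have hmax : max (p.1 - 1 / 4) 0 ≤ max (2 - p.1 - 1 / 4) 0 := max_le_max_right 0 (by linarith)
  exact ⟨(add_le_add_left (pow_le_pow_left₀ (le_max_right _ _) hmax 2) _).trans h₁,
    by nlinarith [sq_nonneg (|p.2| + 1 / 4)]⟩

/-- The points of sup-distance at most `1/4` from the closed unit disk, to the left of `x = 1`. -/
def truncatedDisk : Set (ℝ × ℝ) :=
  {p | (max (|p.1| - 1 / 4) 0) ^ 2 + (max (|p.2| - 1 / 4) 0) ^ 2 ≤ 1} ∩ {p | p.1 ≤ 1}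

/-- The points of the unit disk at sup-distance more than `1/4` from the unit circle. -/
def diskHole : Set (ℝ × ℝ) := {p | (|p.1| + 1 / 4) ^ 2 + (|p.2| + 1 / 4) ^ 2 < 1}

theorem convexOn_abs_fst : ConvexOn ℝ univ fun p : ℝ × ℝ => |p.1| :=
  (convexOn_univ_norm (E := ℝ)).comp_linearMap (LinearMap.fst ℝ ℝ ℝ)

theorem convexOn_abs_snd : ConvexOn ℝ univ fun p : ℝ × ℝ => |p.2| :=
  (convexOn_univ_norm (E := ℝ)).comp_linearMap (LinearMap.snd ℝ ℝ ℝ)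

theorem convex_truncatedDisk : Convex ℝ truncatedDisk := by
  have hx := ((convexOn_abs_fst.add_const (-(1 / 4))).sup (convexOn_const 0 convex_univ)).pow
    (fun _ _ => le_max_right _ _) 2
  have hy := ((convexOn_abs_snd.add_const (-(1 / 4))).sup (convexOn_const 0 convex_univ)).pow
    (fun _ _ => le_max_right _ _) 2
  refine Convex.inter ?_ (convex_halfSpace_le (LinearMap.fst ℝ ℝ ℝ).isLinear 1)
  simpa [sub_eq_add_neg] using (hx.add hy).convex_le 1

theorem convex_diskHole : Convex ℝ diskHole := by
  have hx := (convexOn_abs_fst.add_const (1 / 4)).pow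
    (fun _ _ => add_nonneg (abs_nonneg _) (by norm_num)) 2
  have hy := (convexOn_abs_snd.add_const (1 / 4)).pow
    (fun _ _ => add_nonneg (abs_nonneg _) (by norm_num)) 2
  simpa [diskHole] using (hx.add hy).convex_lt 1

theorem isOpen_diskHole : IsOpen diskHole := isOpen_lt (by fun_prop) (by fun_prop)

theorem isClosed_truncatedDisk : IsClosed truncatedDisk :=
  (isClosed_le (by fun_prop) (by fun_prop)).inter (isClosed_le (by fun_prop) (by fun_prop))

theorem diskHole_mem_nhds : diskHole ∈ 𝓝 0 :=
  isOpen_diskHole.mem_nhds (by norm_num [diskHole])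

theorem closure_diskHole_subset : closure diskHole ⊆ interior truncatedDisk := by
  have hclosure : closure diskHole ⊆ {p | (|p.1| + 1 / 4) ^ 2 + (|p.2| + 1 / 4) ^ 2 ≤ 1} :=
    closure_minimal (fun _ (hp : _ < (1 : ℝ)) => hp.le)
      (isClosed_le (by fun_prop) (by fun_prop))
  have hopen : IsOpen
      ({p : ℝ × ℝ | (max (|p.1| - 1 / 4) 0) ^ 2 + (max (|p.2| - 1 / 4) 0) ^ 2 < 1} ∩
        {p | p.1 < 1}) :=
    (isOpen_lt (by fun_prop) (by fun_prop)).inter (isOpen_lt (by fun_prop) (by fun_prop))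
  have hlt (z : ℝ) : (max (|z| - 1 / 4) 0) ^ 2 < (|z| + 1 / 4) ^ 2 :=
    pow_lt_pow_left₀ (max_lt (by linarith) (by positivity)) (le_max_right _ _) two_ne_zero
  refine hclosure.trans (Subset.trans ?_ (interior_maximal
    (inter_subset_inter (ofPred_subset_ofPred.2 fun _ => le_of_lt)
      (ofPred_subset_ofPred.2 fun _ => le_of_lt)) hopen))
  intro p hp
  have hp : (|p.1| + 1 / 4) ^ 2 + (|p.2| + 1 / 4) ^ 2 ≤ 1 := hp
  simp only [mem_inter_iff, mem_ofPred_eq]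
  exact ⟨by linarith [hlt p.1, hlt p.2],
    by nlinarith [le_abs_self p.1, abs_nonneg p.1, abs_nonneg p.2]⟩

theorem isBounded_truncatedDisk : Bornology.IsBounded truncatedDisk := by
  refine (isBounded_closedBall (x := (0 : ℝ × ℝ)) (r := 5 / 4)).subset fun p hp => ?_
  have hp : (max (|p.1| - 1 / 4) 0) ^ 2 + (max (|p.2| - 1 / 4) 0) ^ 2 ≤ 1 := hp.1
  have hx := le_max_left (|p.1| - 1 / 4) 0
  have hy := le_max_left (|p.2| - 1 / 4) 0
  rw [mem_closedBall_zero_iff, Prod.norm_def, Real.norm_eq_abs, Real.norm_eq_abs]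
  exact max_le (by nlinarith) (by nlinarith)

theorem truncatedDisk_mem_nhds : truncatedDisk ∈ 𝓝 0 :=
  Filter.mem_of_superset diskHole_mem_nhds
    (subset_closure.trans (closure_diskHole_subset.trans interior_subset))

theorem isGaugePair_model : IsGaugePair (gauge truncatedDisk) (gauge diskHole) :=
  isGaugePair_gauge convex_truncatedDisk convex_diskHole diskHole_mem_nhds
    isBounded_truncatedDisk closure_diskHole_subset

theorem gaugeAnnulus_model :
    gaugeAnnulus (gauge truncatedDisk) (gauge diskHole) = leftPart 1 planarModel := by
  rw [gaugeAnnulus_gauge convex_truncatedDisk truncatedDisk_mem_nhds isClosed_truncatedDisk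
    convex_diskHole diskHole_mem_nhds isOpen_diskHole]
  ext p
  rw [mem_leftPart_planarModel, mem_cthickening_planarCircle (by norm_num), sub_zero]
  simp only [truncatedDisk, diskHole, mem_sdiff, mem_inter_iff, mem_ofPred_eq, not_lt]
  tauto

theorem gauge_truncatedDisk_le_one_iff {p : ℝ × ℝ} :
    gauge truncatedDisk p ≤ 1 ↔ p ∈ truncatedDisk := by
  rw [gauge_le_one_iff_mem_closure convex_truncatedDisk truncatedDisk_mem_nhds,
    isClosed_truncatedDisk.closure_eq]

/-- Half the length of the segment cut out of `truncatedDisk` by the line `x = 1`. -/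
def halfChord : ℝ := 1 / 4 + √7 / 4

theorem halfChord_pos : 0 < halfChord := by
  unfold halfChord
  positivity

theorem mem_truncatedDisk_iff_of_fst_eq_one {p : ℝ × ℝ} (hp : p.1 = 1) :
    p ∈ truncatedDisk ↔ |p.2| ≤ halfChord := by
  have hsq : (√7) ^ 2 = 7 := Real.sq_sqrt (by norm_num)
  have hmax : max (|p.2| - 1 / 4) 0 ≤ √7 / 4 ↔ |p.2| ≤ halfChord := by
    rw [max_le_iff, and_iff_left (by positivity), sub_le_iff_le_add', halfChord]
  rw [← hmax, ← pow_le_pow_iff_left₀ (le_max_right _ _) (by positivity) two_ne_zero,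
    truncatedDisk, mem_inter_iff, mem_ofPred_eq, mem_ofPred_eq, hp, and_iff_left le_rfl, abs_one,
    max_eq_left (by norm_num), div_pow, hsq]
  constructor <;> intro h <;> linarith

/-- The gauge of the rectangle `[-3/2, 1] × [-halfChord, halfChord]`. -/
def outerBox (p : ℝ × ℝ) : ℝ := max (max (-(2 / 3 * p.1)) p.1) (|p.2| / halfChord)

/-- The gauge of the rectangle `[-1/2, 1/2] × [-halfChord/3, halfChord/3]`. -/
def innerBox (p : ℝ × ℝ) : ℝ := max (2 * |p.1|) (3 * (|p.2| / halfChord))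

theorem abs_fst_pos_or_abs_snd_div_pos {p : ℝ × ℝ} (hp : p ≠ 0) :
    0 < |p.1| ∨ 0 < |p.2| / halfChord := by
  rw [div_pos_iff_of_pos_right halfChord_pos, abs_pos, abs_pos, ← not_and_or]
  exact fun h => hp (Prod.ext h.1 h.2)

theorem isGauge_outerBox : IsGauge outerBox where
  continuous := by
    unfold outerBox
    fun_prop
  smul ht p := by
    simp only [outerBox, Prod.smul_fst, Prod.smul_snd, smul_eq_mul, abs_mul, abs_of_nonneg ht,
      mul_max_of_nonneg _ _ ht, mul_div_assoc, mul_neg, mul_left_comm]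
  pos {p} hp := by
    have := abs_fst_pos_or_abs_snd_div_pos hp
    simp only [outerBox, lt_max_iff]
    grind

theorem isGauge_innerBox : IsGauge innerBox where
  continuous := by
    unfold innerBox
    fun_prop
  smul ht p := by
    simp only [innerBox, Prod.smul_fst, Prod.smul_snd, smul_eq_mul, abs_mul, abs_of_nonneg ht,
      mul_max_of_nonneg _ _ ht, mul_div_assoc, mul_left_comm]
  pos {p} hp := by
    have := abs_fst_pos_or_abs_snd_div_pos hp
    simp only [innerBox, lt_max_iff]
    grind

theorem isGaugePair_box : IsGaugePair outerBox innerBox where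
  left := isGauge_outerBox
  right := isGauge_innerBox
  lt {p} hp := by
    have := abs_fst_pos_or_abs_snd_div_pos hp
    have := div_nonneg (abs_nonneg p.2) halfChord_pos.le
    simp only [outerBox, innerBox]
    grind

/-- The scaling that takes the box of `outerBox` to `[-1, 2/3] × [-1, 1]`. -/
def boxScale (p : ℝ × ℝ) : ℝ × ℝ := (2 / 3 * p.1, p.2 / halfChord)

theorem continuous_boxScale : Continuous boxScale := by
  unfold boxScale
  fun_prop

theorem boxScale_mem_leftPart_iff {p : ℝ × ℝ} :
    boxScale p ∈ leftPart (2 / 3) twoHoledRectangle ↔ p ∈ gaugeAnnulus outerBox innerBox := by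
  simp only [boxScale, leftPart, twoHoledRectangle, gaugeAnnulus, outerBox, innerBox,
    mem_ofPred_eq, mem_Icc, abs_div, abs_of_pos halfChord_pos, max_le_iff, le_max_iff]
  generalize |p.2| / halfChord = y
  grind

theorem bijOn_boxScale :
    BijOn boxScale (gaugeAnnulus outerBox innerBox) (leftPart (2 / 3) twoHoledRectangle) := by
  refine ⟨fun p => boxScale_mem_leftPart_iff.2, fun p _ q _ h => ?_, fun p hp => ?_⟩
  · rw [boxScale, boxScale, Prod.mk.injEq, div_left_inj' halfChord_pos.ne'] at h
    exact Prod.ext (by linarith) h.2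
  · have hp' : boxScale (3 / 2 * p.1, p.2 * halfChord) = p :=
      Prod.ext (by simp only [boxScale]; ring) (mul_div_cancel_right₀ _ halfChord_pos.ne')
    exact ⟨_, boxScale_mem_leftPart_iff.1 (hp'.symm ▸ hp), hp'⟩

theorem mapsTo_reflectFst_twoHoledRectangle :
    MapsTo (reflectFst (2 / 3)) twoHoledRectangle twoHoledRectangle := by
  intro p hp
  simp only [twoHoledRectangle, reflectFst, mem_ofPred_eq, mem_Icc] at hp ⊢
  grind

/-- The homeomorphism of the left half of `planarModel` onto that of `twoHoledRectangle`. -/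
def modelMap (p : ℝ × ℝ) : ℝ × ℝ :=
  boxScale (annulusMap (gauge truncatedDisk) (gauge diskHole) outerBox innerBox p)

theorem bijOn_modelMap :
    BijOn modelMap (leftPart 1 planarModel) (leftPart (2 / 3) twoHoledRectangle) :=
  bijOn_boxScale.comp (gaugeAnnulus_model ▸ isGaugePair_model.bijOn_annulusMap isGaugePair_box)

theorem continuousOn_modelMap : ContinuousOn modelMap (leftPart 1 planarModel) :=
  continuous_boxScale.comp_continuousOn
    (gaugeAnnulus_model ▸ isGaugePair_model.continuousOn_annulusMap isGaugePair_box)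

theorem outerBox_le_one_iff_of_fst_eq_one {p : ℝ × ℝ} (hp : p.1 = 1) :
    outerBox p ≤ 1 ↔ |p.2| ≤ halfChord := by
  rw [outerBox, hp, max_le_iff, div_le_one halfChord_pos, and_iff_right (by norm_num)]

theorem modelMap_fst_eq_iff {p : ℝ × ℝ} (hp : p ∈ leftPart 1 planarModel) :
    (modelMap p).1 = 2 / 3 ↔ p.1 = 1 := by
  rw [← gaugeAnnulus_model] at hp
  rw [← isGaugePair_model.apply_annulusMap_eq_one_iff isGaugePair_box (f := Prod.fst)
    (isGaugePair_model.left.le_of_forall_le_one (f := LinearMap.fst ℝ ℝ ℝ)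
      fun q hq => (gauge_truncatedDisk_le_one_iff.1 hq).2)
    (fun q => (le_max_right _ _).trans (le_max_left _ _))
    (fun q hq => by rw [gauge_truncatedDisk_le_one_iff, mem_truncatedDisk_iff_of_fst_eq_one hq,
      outerBox_le_one_iff_of_fst_eq_one hq]) hp, modelMap, boxScale]
  constructor <;> intro h <;> linarith

theorem isCompact_leftPart_planarModel : IsCompact (leftPart 1 planarModel) :=
  (((isCompact_planarCircle 0).union (isCompact_planarCircle 2)).cthickening).inter_right
    (isClosed_le continuous_fst continuous_const)

theorem nonempty_homeomorph_planarModel : Nonempty (planarModel ≃ₜ twoHoledRectangle) :=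
  nonempty_homeomorph_of_leftPart isCompact_leftPart_planarModel mapsTo_reflectFst_planarModel
    mapsTo_reflectFst_twoHoledRectangle continuousOn_modelMap bijOn_modelMap
    fun _ => modelMap_fst_eq_iff

theorem isHandlebody_Vcut : IsHandlebody Vcut 2 := by
  obtain ⟨e₁⟩ := nonempty_homeomorph_Vcut_cross
  obtain ⟨e₂⟩ := nonempty_homeomorph_cross_planar
  obtain ⟨e₃⟩ := nonempty_homeomorph_planarModel
  rw [IsHandlebody, modelHandlebody_two]
  exact ⟨(e₁.trans e₂).trans ((Homeomorph.Set.prod _ _).trans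
    ((e₃.symm.prodCongr (Homeomorph.refl _)).trans (Homeomorph.Set.prod _ _).symm))⟩

/-- Cutting `V` along `D` yields a genus two handlebody `V'`, in
which `∂E` separates `∂V'` into two once-punctured tori `T₁` and `T₂`, and `V'` is
homeomorphic to `T₁ × I`. -/
theorem cut_along_D_is_genus_two_and_product :
    IsHandlebody Vcut 2 ∧
    ∃ T1 T2 : Set T3,
      T1 ∪ T2 = frontier Vcut ∧ T1 ∩ T2 = bdE ∧
      IsOncePuncturedTorus T1 ∧ IsOncePuncturedTorus T2 ∧
      Nonempty (Vcut ≃ₜ T1 × (Icc (0 : ℝ) 1)) :=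
  ⟨isHandlebody_Vcut, normRegion T1Profile, normRegion T2Profile, T1_union_T2, T1_inter_T2,
    isOncePuncturedTorus_T1, isOncePuncturedTorus_T2, nonempty_homeomorph_Vcut_prod⟩

end
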